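/- Uniform lower bound for the algebraic entropy (Corollary 1.2(i)): For all real P0, r0, δ > 0 there exists a constant C0 > 0, depending only on P0, r0 and δ, such that for every δ-hyperbolic GCB-space (X,σ) which is P0-packed at scale r0 and every finitely generated, non-elementary, discrete group Γ of σ-isometries of X, the algebraic entropy satisfies EntAlg(Γ) ≥ C0. -/

import Mathlib

open Metric Filter

/-- Four-points condition for `δ`-hyperbolicity. -/
def IsDeltaHyperbolic (X : Type*) [MetricSpace X] (δ : ℝ) : Prop :=
  ∀ x y z w : X,
    dist x y + dist z w ≤ max (dist x z + dist y w) (dist x w + dist y z) + 2 * δ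

/-- `X` is `P₀`-packed at scale `r₀`: any subset of a closed ball of radius `3r₀` whose
points are pairwise at distance `> 2r₀` has cardinality at most `P₀`. -/
def IsPacked (X : Type*) [MetricSpace X] (P₀ r₀ : ℝ) : Prop :=
  ∀ x : X, ∀ S : Finset X, (↑S ⊆ closedBall x (3 * r₀)) →
    (∀ a ∈ S, ∀ b ∈ S, a ≠ b → 2 * r₀ < dist a b) → (S.card : ℝ) ≤ P₀

/-- A geodesically complete, convex, consistent, reversible geodesic bicombing on `X`.
Together with completeness of `X` this is the notion of GCB-space. -/
structure IsGCB {X : Type*} [MetricSpace X] (σ : X → X → ℝ → X) : Prop where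
  source : ∀ x y : X, σ x y 0 = x
  target : ∀ x y : X, σ x y 1 = y
  geodesic : ∀ x y : X, ∀ t ∈ Set.Icc (0:ℝ) 1, ∀ t' ∈ Set.Icc (0:ℝ) 1,
    dist (σ x y t) (σ x y t') = |t - t'| * dist x y
  convex : ∀ x y x' y' : X,
    ConvexOn ℝ (Set.Icc (0:ℝ) 1) fun t => dist (σ x y t) (σ x' y' t)
  consistent : ∀ x y : X, ∀ s t l : ℝ, 0 ≤ s → s ≤ t → t ≤ 1 → l ∈ Set.Icc (0:ℝ) 1 →
    σ (σ x y s) (σ x y t) l = σ x y ((1 - l) * s + l * t)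
  reversible : ∀ x y : X, ∀ t ∈ Set.Icc (0:ℝ) 1, σ x y t = σ y x (1 - t)
  geodComplete : ∀ x y : X, ∃ γ : ℝ → X, Isometry γ ∧
    (∀ s t : ℝ, s ≤ t → ∀ l ∈ Set.Icc (0:ℝ) 1, σ (γ s) (γ t) l = γ (s + l * (t - s))) ∧
    (∀ t ∈ Set.Icc (0:ℝ) 1, σ x y t = γ (t * dist x y))

/-- `g` is a `σ`-isometry: a surjective isometry preserving the bicombing `σ`. -/
def IsSigmaIsometry {X : Type*} [MetricSpace X] (σ : X → X → ℝ → X) (g : X ≃ᵢ X) : Prop :=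
  ∀ x y : X, ∀ t ∈ Set.Icc (0:ℝ) 1, g (σ x y t) = σ (g x) (g y) t

/-- A group of isometries is discrete if for every `x` and `R` only finitely many of its
elements displace `x` at most `R`. -/
def IsDiscreteSubgroup {X : Type*} [MetricSpace X] (Γ : Subgroup (X ≃ᵢ X)) : Prop :=
  ∀ x : X, ∀ R : ℝ, {g : X ≃ᵢ X | g ∈ Γ ∧ dist x (g x) ≤ R}.Finite

/-- A group is virtually nilpotent if it has a nilpotent subgroup of finite index. -/
def IsVirtuallyNilpotent (G : Type*) [Group G] : Prop :=
  ∃ H : Subgroup G, H.FiniteIndex ∧ Group.IsNilpotent H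

/-- `Γ` is non-elementary: it contains two elements generating a subgroup that is not
virtually nilpotent. -/
def IsNonElementary {X : Type*} [MetricSpace X] (Γ : Subgroup (X ≃ᵢ X)) : Prop :=
  ∃ a b : X ≃ᵢ X, a ∈ Γ ∧ b ∈ Γ ∧
    ¬ IsVirtuallyNilpotent ↥(Subgroup.closure ({a, b} : Set (X ≃ᵢ X)))

/-- An isometry is non-elliptic if its orbits are unbounded. -/
def IsNonElliptic {X : Type*} [MetricSpace X] (g : X ≃ᵢ X) : Prop :=
  ∀ x : X, ¬ Bornology.IsBounded (Set.range fun n : ℤ => (g ^ n) x)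

/-- The `r`-almost stabilizer `Γ_r(x)`, generated by the elements of `Γ` displacing `x`
at most `r`. -/
def almostStabilizer {X : Type*} [MetricSpace X] (Γ : Subgroup (X ≃ᵢ X)) (r : ℝ) (x : X) :
    Subgroup (X ≃ᵢ X) :=
  Subgroup.closure {g : X ≃ᵢ X | g ∈ Γ ∧ dist x (g x) ≤ r}

/-- The nilpotence radius of `Γ` at `x`. -/
noncomputable def nilrad {X : Type*} [MetricSpace X] (Γ : Subgroup (X ≃ᵢ X)) (x : X) : ℝ :=
  sSup {r : ℝ | 0 ≤ r ∧ IsVirtuallyNilpotent ↥(almostStabilizer Γ r x)}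

/-- The Margulis domain `M_ε(g)`. -/
def margulisDomain {X : Type*} [MetricSpace X] (g : X ≃ᵢ X) (ε : ℝ) : Set X :=
  {x : X | dist x (g x) ≤ ε}

/-- The generalized Margulis domain `ℳ_ε(g) = ⋃_{i ≠ 0} M_ε(gⁱ)`. -/
def genMargulisDomain {X : Type*} [MetricSpace X] (g : X ≃ᵢ X) (ε : ℝ) : Set X :=
  ⋃ i ∈ {i : ℤ | i ≠ 0}, margulisDomain (g ^ i) ε

/-- `f` parameterizes a geodesic segment from `x` to `y` on `[0, dist x y]`. -/
def IsGeodesicFrom {X : Type*} [MetricSpace X] (f : ℝ → X) (x y : X) : Prop :=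
  f 0 = x ∧ f (dist x y) = y ∧
    ∀ s ∈ Set.Icc 0 (dist x y), ∀ t ∈ Set.Icc 0 (dist x y), dist (f s) (f t) = |s - t|

/-- `X` is a geodesic space. -/
def IsGeodesicSpace (X : Type*) [MetricSpace X] : Prop :=
  ∀ x y : X, ∃ f : ℝ → X, IsGeodesicFrom f x y

/-- `C` is `lam`-quasiconvex: any two of its points are joined by a geodesic contained in
the closed `lam`-neighbourhood of `C`. -/
def IsQuasiconvex {X : Type*} [MetricSpace X] (lam : ℝ) (C : Set X) : Prop :=
  ∀ x ∈ C, ∀ y ∈ C, ∃ f : ℝ → X, IsGeodesicFrom f x y ∧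
    ∀ t ∈ Set.Icc 0 (dist x y), infDist (f t) C ≤ lam

/-- `C` is a convex subset: any two of its points are joined by a geodesic inside `C`. -/
def IsConvexSubset {X : Type*} [MetricSpace X] (C : Set X) : Prop :=
  ∀ x ∈ C, ∀ y ∈ C, ∃ f : ℝ → X, IsGeodesicFrom f x y ∧
    ∀ t ∈ Set.Icc 0 (dist x y), f t ∈ C

/-- Arc-length concatenation of three paths, of respective lengths `d₁`, `d₂` and the rest. -/
noncomputable def concatPath {X : Type*} (d₁ d₂ : ℝ) (f₁ f₂ f₃ : ℝ → X) : ℝ → X :=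
  fun t => if t ≤ d₁ then f₁ t else if t ≤ d₁ + d₂ then f₂ (t - d₁) else f₃ (t - d₁ - d₂)

/-!
A packed GCB-space satisfies a Margulis lemma: there is a radius `M`, depending only on the packing
constants and `δ`, such that `Γ` is virtually nilpotent as soon as, at some point, every word of
length at most `M` in the generators has displacement at most `1000 δ`. It rests on the contraction
of commutators: counting an orbit with the convolution square of a tent function shows that the
displacement of `⁅g, h⁆` is at most a constant times the product of those of `g` and `h`.

If `Γ` is not virtually nilpotent, take a point `x` at which the maximal displacement of the words
of length at most `M + 1` is almost minimal. Minimality prevents all of these words from moving `x`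
in roughly the same direction, and produces a product `g` of two of them whose orbit of `x` is a
quasi-line. If every generator mapped this quasi-line near itself, then so would all of `Γ`, which
would be virtually cyclic. So some generator `s` moves it away, and then `g ^ 20` and
`s * g ^ 20 * s⁻¹`, up to replacing `g` by `g⁻¹` in either of them, freely generate a semigroup.
The balls of radius `n * (40 * (M + 1) + 2)` thus have at least `2 ^ n` elements.
-/

section Geodesics

variable {X : Type*} [MetricSpace X] {σ : X → X → ℝ → X}

theorem IsGeodesicSpace.exists_dist_eq (hX : IsGeodesicSpace X) (x y : X) {R : ℝ} (hR : 0 ≤ R)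
    (hRxy : R ≤ dist x y) : ∃ p, dist x p = R ∧ dist p y = dist x y - R := by
  obtain ⟨f, hf0, hf1, hf⟩ := hX x y
  have h0 : (0 : ℝ) ∈ Set.Icc 0 (dist x y) := Set.left_mem_Icc.2 dist_nonneg
  have h1 : dist x y ∈ Set.Icc 0 (dist x y) := Set.right_mem_Icc.2 dist_nonneg
  refine ⟨f R, ?_, ?_⟩
  · rw [← hf0, hf 0 h0 R ⟨hR, hRxy⟩, zero_sub, abs_neg, abs_of_nonneg hR]
  · nth_rw 1 [← hf1]
    rw [hf R ⟨hR, hRxy⟩ _ h1, abs_sub_comm, abs_of_nonneg (sub_nonneg.2 hRxy)]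

theorem IsGeodesicSpace.exists_dist_le_dist_le (hX : IsGeodesicSpace X) (x y : X) {R ρ : ℝ}
    (hR : 0 ≤ R) (hρ : 0 ≤ ρ) (hxy : dist x y ≤ R + ρ) : ∃ p, dist x p ≤ R ∧ dist p y ≤ ρ := by
  rcases le_total (dist x y) R with h | h
  · exact ⟨y, h, by rwa [dist_self]⟩
  · obtain ⟨p, hxp, hpy⟩ := hX.exists_dist_eq x y hR h
    exact ⟨p, hxp.le, by linarith⟩

theorem IsGCB.dist_source (hσ : IsGCB σ) (x y : X) {t : ℝ} (ht : t ∈ Set.Icc (0 : ℝ) 1) :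
    dist x (σ x y t) = t * dist x y := by
  have := hσ.geodesic x y 0 (by simp) t ht
  rwa [hσ.source, zero_sub, abs_neg, abs_of_nonneg ht.1] at this

theorem IsGCB.isGeodesicSpace (hσ : IsGCB σ) : IsGeodesicSpace X := by
  intro x y
  rcases (dist_nonneg (x := x) (y := y)).eq_or_lt with h0 | h0
  · refine ⟨fun _ => x, rfl, dist_eq_zero.1 h0.symm, fun s hs t ht => ?_⟩
    rw [← h0, Set.Icc_self, Set.mem_singleton_iff] at hs ht
    simp [hs, ht]
  · refine ⟨fun t => σ x y (t / dist x y), ?_, ?_, fun s hs t ht => ?_⟩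
    · simp only [zero_div, hσ.source]
    · simp only [div_self h0.ne', hσ.target]
    · have hdiv : ∀ r ∈ Set.Icc 0 (dist x y), r / dist x y ∈ Set.Icc (0 : ℝ) 1 := fun r hr =>
        ⟨div_nonneg hr.1 h0.le, div_le_one_of_le₀ hr.2 h0.le⟩
      rw [hσ.geodesic x y _ (hdiv s hs) _ (hdiv t ht), ← sub_div, abs_div, abs_of_pos h0,
        div_mul_cancel₀ _ h0.ne']

theorem IsGCB.dist_le (hσ : IsGCB σ) (x y x' y' : X) {t : ℝ} (ht : t ∈ Set.Icc (0 : ℝ) 1) :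
    dist (σ x y t) (σ x' y' t) ≤ (1 - t) * dist x x' + t * dist y y' := by
  have := (hσ.convex x y x' y').2 (Set.left_mem_Icc.2 zero_le_one)
    (Set.right_mem_Icc.2 zero_le_one) (sub_nonneg.2 ht.2) ht.1 (by ring)
  simpa [hσ.source, hσ.target] using this

theorem IsGCB.exists_ray (hσ : IsGCB σ) (x y : X) : ∃ γ : ℝ → X,
    Isometry γ ∧ γ 0 = x ∧ γ (dist x y) = y ∧
      ∀ t, 0 ≤ t → ∀ l ∈ Set.Icc (0 : ℝ) 1, σ x (γ t) l = γ (l * t) := by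
  obtain ⟨γ, hγ, hline, hseg⟩ := hσ.geodComplete x y
  have h0 : γ 0 = x := by simpa [hσ.source] using (hseg 0 (by simp)).symm
  have h1 : γ (dist x y) = y := by simpa [hσ.target] using (hseg 1 (by simp)).symm
  refine ⟨γ, hγ, h0, h1, fun t ht l hl => ?_⟩
  have := hline 0 t ht l hl
  rwa [h0, zero_add, sub_zero] at this

theorem IsGCB.exists_dilation (hσ : IsGCB σ) (x y : X) {c : ℝ} (hc : 1 ≤ c) :
    ∃ z, dist x z = c * dist x y ∧ σ x z c⁻¹ = y := by
  obtain ⟨γ, hγ, h0, h1, hray⟩ := hσ.exists_ray x y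
  have hc0 : 0 < c := by linarith
  have hL : 0 ≤ c * dist x y := mul_nonneg hc0.le dist_nonneg
  refine ⟨γ (c * dist x y), ?_, ?_⟩
  · rw [← h0, hγ.dist_eq, h0, Real.dist_eq, zero_sub, abs_neg, abs_of_nonneg hL]
  · rw [hray _ hL _ ⟨by positivity, inv_le_one_of_one_le₀ hc⟩,
      inv_mul_cancel_left₀ hc0.ne', h1]

theorem IsGCB.exists_extension (hσ : IsGCB σ) (x y : X) {L : ℝ} (hL : 0 < L)
    (hxy : dist x y ≤ L) :
    ∃ z, dist x z = L ∧ dist y z = L - dist x y ∧ σ x z (dist x y / L) = y := by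
  obtain ⟨γ, hγ, h0, h1, hray⟩ := hσ.exists_ray x y
  refine ⟨γ L, ?_, ?_, ?_⟩
  · rw [← h0, hγ.dist_eq, Real.dist_eq, zero_sub, abs_neg, abs_of_pos hL]
  · nth_rw 1 [← h1]
    rw [hγ.dist_eq, dist_comm, Real.dist_eq, abs_of_nonneg (sub_nonneg.2 hxy)]
  · rw [hray L hL.le _ ⟨by positivity, div_le_one_of_le₀ hxy hL.le⟩, div_mul_cancel₀ _ hL.ne', h1]

theorem IsGCB.mul_dist_le_dist_of_dilation (hσ : IsGCB σ) {x y y' z z' : X} {c : ℝ} (hc : 1 ≤ c)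
    (hz : σ x z c⁻¹ = y) (hz' : σ x z' c⁻¹ = y') : c * dist y y' ≤ dist z z' := by
  have hc0 : 0 < c := by linarith
  have := hσ.dist_le x z x z' (t := c⁻¹) ⟨by positivity, inv_le_one_of_one_le₀ hc⟩
  rwa [hz, hz', dist_self, mul_zero, zero_add, inv_mul_eq_div, le_div_iff₀' hc0] at this

end Geodesics

/-- Packing at two independent scales: `s`-separated subsets of closed balls of radius `R` have at
most `N` points. Then `IsPacked X P₀ r₀` bounds `(R, s) = (3r₀, 2r₀)`. -/
def HasPackingBound (X : Type*) [MetricSpace X] (R s : ℝ) (N : ℕ) : Prop :=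
  ∀ x : X, ∀ S : Finset X, ↑S ⊆ closedBall x R →
    (S : Set X).Pairwise (fun a b => s < dist a b) → S.card ≤ N

section Packing

variable {X : Type*} [MetricSpace X] {σ : X → X → ℝ → X} {R ρ s s' P r : ℝ} {N N' : ℕ}

theorem HasPackingBound.mono {R' : ℝ} (h : HasPackingBound X R s N) (hR : R' ≤ R) (hs : s ≤ s') :
    HasPackingBound X R' s' N := fun x S hS hsep =>
  h x S (hS.trans (closedBall_subset_closedBall hR)) (hsep.mono' fun _ _ => hs.trans_lt)

theorem HasPackingBound.card_le_of_pairwise_lt_dist (h : HasPackingBound X R s N) (hs : 0 ≤ s)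
    {ι : Type*} {I : Finset ι} {p : ι → X} {x : X} (hp : ∀ i ∈ I, dist (p i) x ≤ R)
    (hsep : (I : Set ι).Pairwise fun i j => s < dist (p i) (p j)) : I.card ≤ N := by
  classical
  have hinj : Set.InjOn p I := fun i hi j hj hij => by
    by_contra hne
    exact absurd (hsep hi hj hne) (not_lt.2 ((dist_eq_zero.2 hij).le.trans hs))
  rw [← Finset.card_image_of_injOn hinj]
  refine h x _ ?_ ?_
  · rw [Finset.coe_image, Set.image_subset_iff]
    exact hp
  · rw [Finset.coe_image]
    rintro _ ⟨i, hi, rfl⟩ _ ⟨j, hj, rfl⟩ hij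
    exact hsep hi hj (ne_of_apply_ne p hij)

theorem HasPackingBound.exists_net (h : HasPackingBound X R s N) (hs : 0 ≤ s) {x : X} {Y : Set X}
    (hY : Y ⊆ closedBall x R) :
    ∃ Z : Finset X, Z.card ≤ N ∧ ↑Z ⊆ Y ∧ ∀ y ∈ Y, ∃ z ∈ Z, dist y z ≤ s := by
  classical
  let IsNetCard (n : ℕ) : Prop := ∃ Z : Finset X, Z.card = n ∧ ↑Z ⊆ Y ∧
    (Z : Set X).Pairwise (fun a b => s < dist a b)
  have hzero : IsNetCard 0 := ⟨∅, by simp⟩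
  obtain ⟨Z, hcard, hZY, hsep⟩ := Nat.findGreatest_spec (P := IsNetCard) (Nat.zero_le N) hzero
  refine ⟨Z, h x Z (hZY.trans hY) hsep, hZY, fun y hy => ?_⟩
  by_contra! hfar
  have hyZ : y ∉ Z := fun hyZ => absurd (hfar y hyZ) (by rw [dist_self]; exact not_lt.2 hs)
  have hsub : ↑(insert y Z) ⊆ Y := by
    rw [Finset.coe_insert]
    exact Set.insert_subset hy hZY
  have hsep' : (↑(insert y Z) : Set X).Pairwise (fun a b => s < dist a b) := by
    rw [Finset.coe_insert]
    exact hsep.insert fun z hz _ => ⟨hfar z hz, by rw [dist_comm]; exact hfar z hz⟩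
  have hcard' : (insert y Z).card = Z.card + 1 := Finset.card_insert_of_notMem hyZ
  have hle := Nat.le_findGreatest (P := IsNetCard) (hcard' ▸ h x _ (hsub.trans hY) hsep')
    ⟨insert y Z, hcard', hsub, hsep'⟩
  omega

theorem HasPackingBound.enlarge (hX : IsGeodesicSpace X) {R' : ℝ} (h : HasPackingBound X R s N)
    (h' : HasPackingBound X R' s' N') (hR : 0 ≤ R) (hρ : 0 ≤ ρ) (hs : 0 ≤ s) (hR' : ρ + s ≤ R') :
    HasPackingBound X (R + ρ) s' (N * N') := by
  classical
  intro x S hS hsep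
  obtain ⟨Z, hZcard, -, hZ⟩ := h.exists_net hs (subset_refl (closedBall x R))
  have hnear : ∀ a ∈ S, ∃ z ∈ Z, dist a z ≤ R' := fun a ha => by
    obtain ⟨p, hxp, hpa⟩ := hX.exists_dist_le_dist_le x a hR hρ (mem_closedBall'.1 (hS ha))
    obtain ⟨z, hz, hpz⟩ := hZ p (mem_closedBall'.2 hxp)
    exact ⟨z, hz, by linarith [dist_triangle_left a z p]⟩
  choose! f hfZ hf using hnear
  have hfiber : ∀ z ∈ Z, (S.filter (f · = z)).card ≤ N' := fun z _ =>
    h' z _ (fun a ha => by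
        obtain ⟨haS, rfl⟩ := Finset.mem_filter.1 ha
        exact hf a haS)
      (hsep.mono (Finset.coe_subset.2 (Finset.filter_subset _ S)))
  calc S.card ≤ N' * Z.card := Finset.card_le_mul_card_image_of_maps_to hfZ N' hfiber
    _ ≤ N' * N := Nat.mul_le_mul_left N' hZcard
    _ = N * N' := mul_comm _ _

-- Dilating the ball of radius `ρ` to radius `3r` expands distances by at least `3r / ρ`.
theorem IsPacked.hasPackingBound_of_le (hP : IsPacked X P r) (hσ : IsGCB σ) (hr : 0 < r)
    (hρ : 0 < ρ) (hρr : ρ ≤ 3 * r) : HasPackingBound X ρ (2 / 3 * ρ) ⌊P⌋₊ := by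
  classical
  intro x S hS hsep
  set c := 3 * r / ρ
  have hcρ : c * ρ = 3 * r := div_mul_cancel₀ _ hρ.ne'
  have hc1 : 1 ≤ c := (one_le_div hρ).2 hρr
  choose e hnorm hdil using fun y => hσ.exists_dilation x y hc1
  have hfar : ∀ a ∈ S, ∀ b ∈ S, a ≠ b → 2 * r < dist (e a) (e b) := fun a ha b hb hab =>
    calc 2 * r = c * (2 / 3 * ρ) := by linarith
      _ < c * dist a b := mul_lt_mul_of_pos_left (hsep ha hb hab) (by positivity)
      _ ≤ dist (e a) (e b) := hσ.mul_dist_le_dist_of_dilation hc1 (hdil a) (hdil b)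
  have hinj : Set.InjOn e S := fun a ha b hb hab => by
    by_contra hne
    have := hfar a ha b hb hne
    rw [hab, dist_self] at this
    linarith
  rw [← Finset.card_image_of_injOn hinj]
  refine Nat.le_floor (hP x _ ?_ ?_)
  · rw [Finset.coe_image, Set.image_subset_iff]
    intro a ha
    rw [Set.mem_preimage, mem_closedBall', hnorm, ← hcρ]
    exact mul_le_mul_of_nonneg_left (mem_closedBall'.1 (hS ha)) (by positivity)
  · simp only [Finset.forall_mem_image]
    exact fun a ha b hb hab => hfar a ha b hb (ne_of_apply_ne e hab)

theorem IsPacked.hasPackingBound_radius (hP : IsPacked X P r) (hσ : IsGCB σ) (hr : 0 < r)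
    (k : ℕ) : HasPackingBound X (3 * r + k * r) (2 * r) (⌊P⌋₊ ^ (k + 1)) := by
  have hbase : HasPackingBound X (3 * r) (2 * r) ⌊P⌋₊ :=
    (hP.hasPackingBound_of_le hσ hr (by positivity) le_rfl).mono le_rfl (by linarith)
  induction k with
  | zero => simpa using hbase
  | succ k ih =>
    have := ih.enlarge hσ.isGeodesicSpace hbase (ρ := r) (by positivity) hr.le (by positivity)
      (by linarith)
    rw [pow_succ]
    exact this.mono (by push_cast; linarith) le_rfl

theorem IsPacked.hasPackingBound_radius_scale (hP : IsPacked X P r) (hσ : IsGCB σ) (hr : 0 < r)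
    (k j : ℕ) :
    HasPackingBound X (3 * r + k * r) ((2 / 3) ^ j * (2 * r)) (⌊P⌋₊ ^ (k + 1 + j)) := by
  induction j with
  | zero => simpa using hP.hasPackingBound_radius hσ hr k
  | succ j ih =>
    have hle : (2 / 3 : ℝ) ^ j ≤ 1 := pow_le_one₀ (by norm_num) (by norm_num)
    have hsmall := hP.hasPackingBound_of_le hσ hr (ρ := (2 / 3) ^ j * (2 * r)) (by positivity)
      (by nlinarith)
    have := ih.enlarge hσ.isGeodesicSpace hsmall (ρ := 0) (by positivity) le_rfl (by positivity)
      (by linarith)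
    rw [← add_assoc, pow_succ]
    exact this.mono (by linarith) (by linarith)

end Packing

theorem exists_hasPackingBound (P : ℝ) {r : ℝ} (hr : 0 < r) (R : ℝ) {s : ℝ} (hs : 0 < s) :
    ∃ N : ℕ, ∀ (X : Type*) [MetricSpace X] (σ : X → X → ℝ → X), IsGCB σ → IsPacked X P r →
      HasPackingBound X R s N := by
  obtain ⟨k, hk⟩ := exists_nat_ge (R / r)
  obtain ⟨j, hj⟩ := exists_pow_lt_of_lt_one (show 0 < s / (2 * r) by positivity)
    (show (2 / 3 : ℝ) < 1 by norm_num)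
  rw [div_le_iff₀ hr] at hk
  rw [lt_div_iff₀ (by positivity)] at hj
  exact ⟨_, fun X _ σ hσ hP =>
    (hP.hasPackingBound_radius_scale hσ hr k j).mono (by linarith) hj.le⟩

section Displacement

variable {X : Type*} [MetricSpace X]

theorem dist_self_mul_le (g h : X ≃ᵢ X) (p : X) :
    dist p ((g * h) p) ≤ dist p (g p) + dist p (h p) :=
  calc dist p (g (h p)) ≤ dist p (g p) + dist (g p) (g (h p)) := dist_triangle _ _ _
    _ = dist p (g p) + dist p (h p) := by rw [g.dist_eq]

theorem dist_apply_left (g : X ≃ᵢ X) (p q : X) : dist (g p) q = dist p (g⁻¹ q) := by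
  rw [← g.dist_eq p (g⁻¹ q), IsometryEquiv.apply_inv_self]

theorem dist_self_inv (g : X ≃ᵢ X) (p : X) : dist p (g⁻¹ p) = dist p (g p) := by
  rw [← dist_apply_left, dist_comm]

theorem dist_self_pow_le (g : X ≃ᵢ X) (n : ℕ) (p : X) :
    dist p ((g ^ n) p) ≤ n * dist p (g p) := by
  induction n with
  | zero => simp
  | succ n ih =>
    rw [pow_succ]
    push_cast
    linarith [dist_self_mul_le (g ^ n) g p]

theorem dist_self_conj (g h : X ≃ᵢ X) (p : X) :
    dist p ((g * h * g⁻¹) p) = dist (g⁻¹ p) (h (g⁻¹ p)) := by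
  rw [dist_comm, IsometryEquiv.mul_apply, IsometryEquiv.mul_apply, dist_apply_left, dist_comm]

/-- The displacement of `u` is at most `M` on the closed ball of centre `x` and radius `r`. -/
def MovesLE (u : X ≃ᵢ X) (x : X) (r M : ℝ) : Prop :=
  ∀ y, dist y x ≤ r → dist y (u y) ≤ M

variable {u : X ≃ᵢ X} {x : X} {r M : ℝ}

theorem MovesLE.mono {r' M' : ℝ} (h : MovesLE u x r M) (hr : r' ≤ r) (hM : M ≤ M') :
    MovesLE u x r' M' :=
  fun y hy => (h y (hy.trans hr)).trans hM

theorem MovesLE.mono_center {y : X} {s : ℝ} (h : MovesLE u x r M) (hy : dist y x + s ≤ r) :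
    MovesLE u y s M :=
  fun w hw => h w (by linarith [dist_triangle w y x])

theorem MovesLE.nonneg (h : MovesLE u x r M) (hr : 0 ≤ r) : 0 ≤ M :=
  dist_nonneg.trans (h x (by rwa [dist_self]))

theorem MovesLE.inv (h : MovesLE u x r M) : MovesLE u⁻¹ x r M := fun y hy => by
  rw [dist_self_inv]
  exact h y hy

theorem MovesLE.pow (h : MovesLE u x r M) (n : ℕ) : MovesLE (u ^ n) x r (n * M) := fun y hy =>
  (dist_self_pow_le u n y).trans (by gcongr; exact h y hy)

end Displacement

section Escape

variable {X : Type*} [MetricSpace X] {σ : X → X → ℝ → X}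

theorem IsSigmaIsometry.mul {g h : X ≃ᵢ X} (hg : IsSigmaIsometry σ g) (hh : IsSigmaIsometry σ h) :
    IsSigmaIsometry σ (g * h) := fun x y t ht => by
  simp only [IsometryEquiv.mul_apply]
  rw [hh x y t ht, hg _ _ t ht]

variable {u v : X ≃ᵢ X} {x y : X} {r l ρ M : ℝ}

theorem IsGCB.dist_apply_apply_le (hσ : IsGCB σ) (hu : IsSigmaIsometry σ u)
    (hv : IsSigmaIsometry σ v) (y z : X) {t : ℝ} (ht : t ∈ Set.Icc (0 : ℝ) 1) :
    dist (u (σ y z t)) (v (σ y z t)) ≤ (1 - t) * dist (u y) (v y) + t * dist (u z) (v z) := by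
  rw [hu y z t ht, hv y z t ht]
  exact hσ.dist_le _ _ _ _ ht

-- Prolong the geodesic from `z` to `y` by `ρ` and use the convexity of the displacement on it.
theorem IsGCB.displacement_sub_le (hσ : IsGCB σ) (hu : IsSigmaIsometry σ u) (hρ : 0 < ρ)
    (hM : MovesLE u y ρ M) (z : X) :
    dist y (u y) - dist z (u z) ≤ dist y z / ρ * M := by
  have hd := dist_nonneg (x := z) (y := y)
  have hL : 0 < dist z y + ρ := by linarith
  obtain ⟨w, -, hyw, hw⟩ := hσ.exists_extension z y hL (by linarith)
  have hwM : dist w (u w) ≤ M := hM w (by rw [dist_comm]; linarith)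
  have hconv := hσ.dist_apply_apply_le (u := 1) (fun _ _ _ _ => rfl) hu z w
    (t := dist z y / (dist z y + ρ)) ⟨by positivity, div_le_one_of_le₀ (by linarith) hL.le⟩
  have h1 : 1 - dist z y / (dist z y + ρ) = ρ / (dist z y + ρ) := by field_simp; ring
  rw [hw, h1, div_mul_eq_mul_div, div_mul_eq_mul_div, ← add_div, le_div_iff₀ hL] at hconv
  simp only [IsometryEquiv.coe_one, id] at hconv
  have hy : 0 ≤ dist y (u y) := dist_nonneg
  rw [dist_comm y z, div_mul_eq_mul_div, le_div_iff₀ hρ]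
  nlinarith

-- The midpoint of `y` and `u y` is displaced by at most half of `dist y (u (u y))`.
theorem IsGCB.displacement_mul_le_displacement_sq (hσ : IsGCB σ) (hu : IsSigmaIsometry σ u)
    (hρ : 0 < ρ) (hM : MovesLE u y ρ M) :
    dist y (u y) * (2 - M / ρ) ≤ dist y ((u ^ 2) y) := by
  have hhalf : (1 / 2 : ℝ) ∈ Set.Icc (0 : ℝ) 1 := ⟨by norm_num, by norm_num⟩
  have hy := hσ.displacement_sub_le hu hρ hM (σ y (u y) (1 / 2))
  have hmid := hσ.dist_le (u y) y (u y) (u (u y)) hhalf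
  rw [← hu y (u y) _ hhalf, hσ.reversible (u y) y _ hhalf, dist_self, mul_zero, zero_add,
    show (1 : ℝ) - 1 / 2 = 1 / 2 by norm_num] at hmid
  rw [hσ.dist_source _ _ hhalf,
    show 1 / 2 * dist y (u y) / ρ * M = dist y (u y) * (M / ρ) / 2 by ring] at hy
  rw [pow_two, IsometryEquiv.mul_apply]
  linarith

theorem MovesLE.sq_pow_two_pow {J : ℕ} (h : ∀ j < J + 1, MovesLE (u ^ 2 ^ j) x r M) :
    ∀ j < J, MovesLE ((u ^ 2) ^ 2 ^ j) x r M := fun j hj => by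
  rw [← pow_mul, ← pow_succ']
  exact h (j + 1) (by omega)

theorem IsGCB.movesLE_of_forall_pow_two_pow (hσ : IsGCB σ) (hl : 0 < l) {J : ℕ}
    (hu : IsSigmaIsometry σ u)
    (h : ∀ j < J + 1, MovesLE (u ^ 2 ^ j) x (r + l) (l / 8)) :
    MovesLE u x (r + l / 2) (l / 4 * (4 / 7) ^ (J + 1)) := by
  have hu8 : MovesLE u x (r + l) (l / 8) := by simpa using h 0 (by omega)
  induction J generalizing u with
  | zero => exact hu8.mono (by linarith) (by linarith)
  | succ J ih =>
    intro y hy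
    have hsq : IsSigmaIsometry σ (u ^ 2) := by rw [pow_two]; exact hu.mul hu
    have h2 := MovesLE.sq_pow_two_pow h
    have hsq_le := ih hsq h2 (by simpa using h2 0 (by omega)) y hy
    have hgrow := hσ.displacement_mul_le_displacement_sq hu (half_pos hl)
      (hu8.mono_center (y := y) (by linarith))
    rw [show l / 8 / (l / 2) = 1 / 4 by field_simp; norm_num] at hgrow
    rw [pow_succ]
    linarith

-- The factor `2 / 3 + 1 / 3 * (4 / 7) ^ J` absorbs the product of the losses `1 - M / (2ρ)` of the
-- successive squarings, which by the geometric decay of `M` is bounded away from `0`.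
theorem IsGCB.two_pow_mul_displacement_le (hσ : IsGCB σ) (hl : 0 < l) {J : ℕ} {p : X}
    (hu : IsSigmaIsometry σ u) (h : ∀ j < J, MovesLE (u ^ 2 ^ j) x (r + l) (l / 8))
    (hp : dist p x ≤ r) :
    2 ^ J * dist p (u p) * (2 / 3 + 1 / 3 * (4 / 7) ^ J) ≤ dist p ((u ^ 2 ^ J) p) := by
  induction J generalizing u with
  | zero => norm_num
  | succ J ih =>
    have hsq : IsSigmaIsometry σ (u ^ 2) := by rw [pow_two]; exact hu.mul hu
    have hpow := ih hsq (MovesLE.sq_pow_two_pow h)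
    rw [← pow_mul, ← pow_succ'] at hpow
    have hgrow := hσ.displacement_mul_le_displacement_sq hu (half_pos hl)
      ((hσ.movesLE_of_forall_pow_two_pow hl hu h).mono_center (y := p) (by linarith))
    rw [show l / 4 * (4 / 7) ^ (J + 1) / (l / 2) = 2 / 7 * (4 / 7 : ℝ) ^ J by
      field_simp; ring] at hgrow
    have ht0 : (0 : ℝ) ≤ (4 / 7) ^ J := by positivity
    have ht1 : (4 / 7 : ℝ) ^ J ≤ 1 := pow_le_one₀ (by norm_num) (by norm_num)
    rw [pow_succ (4 / 7 : ℝ)]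
    set t : ℝ := (4 / 7) ^ J
    have hb : 0 ≤ dist p (u p) := dist_nonneg
    calc 2 ^ (J + 1) * dist p (u p) * (2 / 3 + 1 / 3 * (t * (4 / 7)))
        = 2 ^ J * (2 * (2 / 3 + 1 / 3 * (t * (4 / 7))) * dist p (u p)) := by ring
      _ ≤ 2 ^ J * (dist p (u p) * (2 - 2 / 7 * t) * (2 / 3 + 1 / 3 * t)) := by
          refine mul_le_mul_of_nonneg_left ?_ (by positivity)
          nlinarith [mul_nonneg hb (mul_nonneg ht0 (sub_nonneg.2 ht1))]
      _ ≤ 2 ^ J * (dist p ((u ^ 2) p) * (2 / 3 + 1 / 3 * t)) := by gcongr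
      _ = 2 ^ J * dist p ((u ^ 2) p) * (2 / 3 + 1 / 3 * t) := by ring
      _ ≤ dist p ((u ^ 2 ^ (J + 1)) p) := hpow

theorem IsGCB.displacement_le_div_two_pow (hσ : IsGCB σ) (hl : 0 < l) {J : ℕ} {p : X}
    (hu : IsSigmaIsometry σ u) (h : ∀ j < J, MovesLE (u ^ 2 ^ j) x (r + l) (l / 8))
    (hp : dist p x ≤ r) : dist p (u p) ≤ 2 / 2 ^ J * dist p ((u ^ 2 ^ J) p) := by
  rw [div_mul_eq_mul_div, le_div_iff₀ (by positivity)]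
  have hgrow := hσ.two_pow_mul_displacement_le hl hu h hp
  have hbase : 0 ≤ 2 ^ J * dist p (u p) := by positivity
  have hloss : 0 ≤ 2 ^ J * dist p (u p) * (4 / 7) ^ J := by positivity
  linarith

theorem IsGCB.apply_eq_self_of_forall_pow_two_pow (hσ : IsGCB σ) (hu : IsSigmaIsometry σ u)
    (hl : 0 < l) (h : ∀ j, MovesLE (u ^ 2 ^ j) x (r + l) (l / 8)) {p : X} (hp : dist p x ≤ r) :
    u p = p := by
  have hbound : ∀ J : ℕ, dist p (u p) ≤ l / 4 * (1 / 2) ^ J := fun J =>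
    calc dist p (u p) ≤ 2 / 2 ^ J * dist p ((u ^ 2 ^ J) p) :=
          hσ.displacement_le_div_two_pow hl hu (fun j _ => h j) hp
      _ ≤ 2 / 2 ^ J * (l / 8) := by gcongr; exact h J p (by linarith)
      _ = l / 4 * (1 / 2) ^ J := by rw [one_div, inv_pow]; ring
  have hlim : Tendsto (fun J : ℕ => l / 4 * (1 / 2 : ℝ) ^ J) atTop (nhds (l / 4 * 0)) :=
    (tendsto_pow_atTop_nhds_zero_of_lt_one (by norm_num) (by norm_num)).const_mul _
  rw [mul_zero] at hlim
  exact (dist_le_zero.1 (ge_of_tendsto' hlim hbound)).symm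

theorem IsGCB.forall_apply_eq_self_or_exists_not_movesLE (hσ : IsGCB σ) (hu : IsSigmaIsometry σ u)
    (hl : 0 < l) (h : MovesLE u x (r + l) (l / 8)) :
    (∀ p, dist p x ≤ r → u p = p) ∨ ∃ J : ℕ, ¬ MovesLE (u ^ 2 ^ J) x (r + l) (l / 8) ∧
      MovesLE u x r (l / 2 / 2 ^ J) := by
  classical
  by_cases hall : ∀ j, MovesLE (u ^ 2 ^ j) x (r + l) (l / 8)
  · exact Or.inl fun p hp => hσ.apply_eq_self_of_forall_pow_two_pow hu hl hall hp
  push Not at hall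
  refine Or.inr ⟨Nat.find hall, Nat.find_spec hall, fun p hp => ?_⟩
  have hlt : ∀ j < Nat.find hall, MovesLE (u ^ 2 ^ j) x (r + l) (l / 8) :=
    fun j hj => not_not.1 (Nat.find_min hall hj)
  obtain ⟨i, hi⟩ : ∃ i, Nat.find hall = i + 1 :=
    Nat.exists_eq_succ_of_ne_zero ((Nat.find_pos hall).2 (by simpa using h)).ne'
  rw [hi] at hlt ⊢
  have hlast : dist p ((u ^ 2 ^ (i + 1)) p) ≤ l / 4 := by
    have hsq := dist_self_pow_le (u ^ 2 ^ i) 2 p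
    rw [← pow_mul, ← pow_succ] at hsq
    push_cast at hsq
    linarith [hlt i (by omega) p (by linarith)]
  calc dist p (u p) ≤ 2 / 2 ^ (i + 1) * dist p ((u ^ 2 ^ (i + 1)) p) :=
        hσ.displacement_le_div_two_pow hl hu hlt hp
    _ ≤ 2 / 2 ^ (i + 1) * (l / 4) := by gcongr
    _ = l / 2 / 2 ^ (i + 1) := by ring

end Escape

section Convolution

variable {G : Type*} [Group G]

/-- The convolution square of a function on a group, meaningful for finitely supported functions as
`∑ᶠ` is `0` if infinitely many terms do not vanish. It counts the elements of a discrete group. -/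
noncomputable def convSquare (ψ : G → ℝ) (k : G) : ℝ := ∑ᶠ y, ψ y * ψ (y⁻¹ * k)

theorem convSquare_mul (ψ : G → ℝ) (g k : G) :
    convSquare ψ (g * k) = ∑ᶠ y, ψ (g * y) * ψ (y⁻¹ * k) := by
  rw [convSquare, ← finsum_comp_equiv (Equiv.mulLeft g)]
  simp [mul_assoc]

theorem convSquare_mul_sub {ψ : G → ℝ} (hψ : (Function.support ψ).Finite) (g k : G) :
    convSquare ψ (g * k) - convSquare ψ k = ∑ᶠ y, (ψ (g * y) - ψ y) * ψ (y⁻¹ * k) := by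
  have hgψ : (Function.support fun y => ψ (g * y)).Finite :=
    hψ.preimage (mul_right_injective g).injOn
  rw [convSquare_mul, convSquare, ← finsum_sub_distrib
    (hgψ.subset fun y hy => left_ne_zero_of_mul hy) (hψ.subset fun y hy => left_ne_zero_of_mul hy)]
  exact finsum_congr fun y => by ring

-- Left translation by `g` acts on the first factor of the convolution and that by `h` on the
-- second one, so that the mixed second difference is a sum of products of first differences.
theorem convSquare_second_difference {ψ : G → ℝ} (hψ : (Function.support ψ).Finite) (g h k : G) :
    convSquare ψ (g * (h * k)) - convSquare ψ (h * k) - (convSquare ψ (g * k) - convSquare ψ k) =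
      ∑ᶠ y, (ψ (g * y) - ψ y) * (ψ (y⁻¹ * (h * k)) - ψ (y⁻¹ * k)) := by
  have hgψ : (Function.support fun y => ψ (g * y) - ψ y).Finite :=
    ((hψ.preimage (mul_right_injective g).injOn).union hψ).subset (Function.support_sub _ _)
  rw [convSquare_mul_sub hψ, convSquare_mul_sub hψ, ← finsum_sub_distrib
    (hgψ.subset fun y hy => left_ne_zero_of_mul hy) (hgψ.subset fun y hy => left_ne_zero_of_mul hy)]
  exact finsum_congr fun y => by ring

theorem abs_convSquare_second_difference_le {ψ : G → ℝ} (hψ : (Function.support ψ).Finite)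
    {g h k : G} {A : Finset G} {a b : ℝ} (ha : 0 ≤ a) (hA : ∀ y, y ∉ A → ψ (g * y) = ψ y)
    (hg : ∀ y ∈ A, |ψ (g * y) - ψ y| ≤ a)
    (hh : ∀ y ∈ A, |ψ (y⁻¹ * (h * k)) - ψ (y⁻¹ * k)| ≤ b) :
    |convSquare ψ (g * (h * k)) - convSquare ψ (h * k) -
      (convSquare ψ (g * k) - convSquare ψ k)| ≤ A.card * (a * b) := by
  rw [convSquare_second_difference hψ, finsum_eq_sum_of_support_subset (s := A)]
  · refine (Finset.abs_sum_le_sum_abs _ _).trans ?_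
    rw [← nsmul_eq_mul]
    refine Finset.sum_le_card_nsmul _ _ _ fun y hy => ?_
    rw [abs_mul]
    exact mul_le_mul (hg y hy) (hh y hy) (abs_nonneg _) ha
  · intro y hy
    by_contra hyA
    exact left_ne_zero_of_mul hy (sub_eq_zero.2 (hA y hyA))

end Convolution

section OrbitCounting

open scoped commutatorElement

variable {X : Type*} [MetricSpace X] {Γ : Subgroup (X ≃ᵢ X)}

theorem IsDiscreteSubgroup.finite_dist_le (hΓ : IsDiscreteSubgroup Γ) (q : X) (R : ℝ) :
    {y : ↥Γ | dist q (y.1 q) ≤ R}.Finite := by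
  refine Set.Finite.of_finite_image ((hΓ q R).subset ?_) Subtype.val_injective.injOn
  rintro _ ⟨y, hy, rfl⟩
  exact ⟨y.2, hy⟩

/-- The finite set of the elements of a discrete group which displace `q` by at most `R`. -/
noncomputable def IsDiscreteSubgroup.orbitBall (hΓ : IsDiscreteSubgroup Γ) (q : X) (R : ℝ) :
    Finset ↥Γ :=
  (hΓ.finite_dist_le q R).toFinset

theorem IsDiscreteSubgroup.mem_orbitBall (hΓ : IsDiscreteSubgroup Γ) {q : X} {R : ℝ} {y : ↥Γ} :
    y ∈ hΓ.orbitBall q R ↔ dist q (y.1 q) ≤ R := by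
  simp [IsDiscreteSubgroup.orbitBall]

theorem dist_inv_mul_apply (y k : ↥Γ) (q : X) : dist q ((y⁻¹ * k).1 q) = dist (y.1 q) (k.1 q) := by
  rw [← y.1.dist_eq]
  simp

theorem IsDiscreteSubgroup.card_orbitBall_le (hΓ : IsDiscreteSubgroup Γ) (q : X) {R s : ℝ} {N : ℕ}
    (hs : 0 ≤ s) (hN : HasPackingBound X R s N) :
    (hΓ.orbitBall q R).card ≤ N * (hΓ.orbitBall q s).card := by
  classical
  obtain ⟨Z, hZN, hZ, hnear⟩ := hN.exists_net hs
    (Y := (fun y : ↥Γ => y.1 q) '' hΓ.orbitBall q R) (x := q) (by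
      rintro _ ⟨y, hy, rfl⟩
      rw [mem_closedBall, dist_comm]
      exact hΓ.mem_orbitBall.1 hy)
  have : Nonempty X := ⟨q⟩
  choose! f hf using fun y (hy : y ∈ hΓ.orbitBall q R) => hnear _ ⟨y, hy, rfl⟩
  rw [mul_comm]
  refine (Finset.card_le_mul_card_image_of_maps_to (f := f) (t := Z) (fun y hy => (hf y hy).1)
    _ fun z hz => ?_).trans (Nat.mul_le_mul_left _ hZN)
  obtain ⟨y₀, -, rfl⟩ := hZ hz
  refine Finset.card_le_card_of_injOn (fun y => y₀⁻¹ * y) (fun y hy => ?_)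
    (mul_right_injective _).injOn
  obtain ⟨hyR, hyz⟩ : y ∈ hΓ.orbitBall q R ∧ f y = y₀.1 q := Finset.mem_filter.1 hy
  rw [Finset.mem_coe, hΓ.mem_orbitBall, dist_inv_mul_apply, dist_comm]
  exact hyz ▸ (hf y hyR).2

/-- The tent function of width `κ` on the orbit of `q`, seen as a function on the group. -/
noncomputable def orbitTent (Γ : Subgroup (X ≃ᵢ X)) (q : X) (κ : ℝ) (k : ↥Γ) : ℝ :=
  max 0 (1 - dist q (k.1 q) / κ)

variable {q : X} {κ a b : ℝ} {g h : ↥Γ}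

theorem orbitTent_eq_zero (hκ : 0 < κ) {k : ↥Γ} (hk : κ ≤ dist q (k.1 q)) :
    orbitTent Γ q κ k = 0 := by
  refine max_eq_left ?_
  rw [sub_nonpos, le_div_iff₀ hκ]
  linarith

theorem abs_orbitTent_sub_le (hκ : 0 < κ) (k k' : ↥Γ) :
    |orbitTent Γ q κ k - orbitTent Γ q κ k'| ≤ |dist q (k.1 q) - dist q (k'.1 q)| / κ := by
  refine (abs_max_sub_max_le_max _ _ _ _).trans ?_
  rw [sub_self, abs_zero, max_eq_right (abs_nonneg _), sub_sub_sub_cancel_left, ← sub_div, abs_div,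
    abs_of_pos hκ, abs_sub_comm]

theorem orbitTent_inv (k : ↥Γ) : orbitTent Γ q κ k⁻¹ = orbitTent Γ q κ k := by
  rw [orbitTent, Subgroup.coe_inv, dist_self_inv, orbitTent]

theorem support_orbitTent_subset (hκ : 0 < κ) :
    Function.support (orbitTent Γ q κ) ⊆ {y | dist q (y.1 q) ≤ κ} := fun _ hy =>
  (not_le.1 fun hle => hy (orbitTent_eq_zero hκ hle)).le

theorem IsDiscreteSubgroup.finite_support_orbitTent (hΓ : IsDiscreteSubgroup Γ) (hκ : 0 < κ) :
    (Function.support (orbitTent Γ q κ)).Finite :=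
  (hΓ.finite_dist_le q κ).subset (support_orbitTent_subset hκ)

theorem convSquare_orbitTent_eq_zero (hκ : 0 < κ) {w : ↥Γ} (hw : 2 * κ ≤ dist q (w.1 q)) :
    convSquare (orbitTent Γ q κ) w = 0 := by
  refine (finsum_congr fun y => ?_).trans finsum_zero
  rcases le_total κ (dist q (y.1 q)) with hy | hy
  · rw [orbitTent_eq_zero hκ hy, zero_mul]
  · rw [orbitTent_eq_zero (k := y⁻¹ * w) hκ, mul_zero]
    rw [dist_inv_mul_apply]
    linarith [dist_triangle q (y.1 q) (w.1 q)]

theorem IsDiscreteSubgroup.card_orbitBall_div_four_le_convSquare_one (hΓ : IsDiscreteSubgroup Γ)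
    (hκ : 0 < κ) : ((hΓ.orbitBall q (κ / 2)).card : ℝ) / 4 ≤ convSquare (orbitTent Γ q κ) 1 := by
  have hsupp : (Function.support fun y : ↥Γ => orbitTent Γ q κ y * orbitTent Γ q κ (y⁻¹ * 1)) ⊆
      hΓ.orbitBall q κ := fun y hy =>
    hΓ.mem_orbitBall.2 (support_orbitTent_subset hκ (left_ne_zero_of_mul hy))
  have hsub : hΓ.orbitBall q (κ / 2) ⊆ hΓ.orbitBall q κ := fun y hy =>
    hΓ.mem_orbitBall.2 ((hΓ.mem_orbitBall.1 hy).trans (by linarith))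
  rw [convSquare, finsum_eq_sum_of_support_subset _ hsupp]
  simp only [mul_one, orbitTent_inv]
  refine le_trans ?_ (Finset.sum_le_sum_of_subset_of_nonneg hsub fun _ _ _ => mul_self_nonneg _)
  rw [div_eq_mul_inv, ← nsmul_eq_mul]
  refine Finset.card_nsmul_le_sum _ _ _ fun y hy => ?_
  have hhalf : 1 / 2 ≤ orbitTent Γ q κ y := by
    refine le_trans ?_ (le_max_right _ _)
    have : dist q (y.1 q) / κ ≤ 1 / 2 := by
      rw [div_le_iff₀ hκ]
      linarith [hΓ.mem_orbitBall.1 hy]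
    linarith
  nlinarith

theorem IsDiscreteSubgroup.abs_convSquare_second_difference_le (hΓ : IsDiscreteSubgroup Γ)
    (hκ : 0 < κ) (hg : MovesLE g.1 q (2 * κ) a) (hh : MovesLE h.1 q (2 * κ) b) (ha : a ≤ κ)
    (k : ↥Γ) :
    |convSquare (orbitTent Γ q κ) (g * (h * k)) - convSquare (orbitTent Γ q κ) (h * k) -
      (convSquare (orbitTent Γ q κ) (g * k) - convSquare (orbitTent Γ q κ) k)| ≤
      (hΓ.orbitBall q (2 * κ)).card * (a / κ * (b / κ)) := by
  have ha0 : 0 ≤ a := hg.nonneg (by positivity)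
  have hgy : ∀ y : ↥Γ, |dist q ((g * y).1 q) - dist q (y.1 q)| ≤ a := fun y => by
    rw [Subgroup.coe_mul, IsometryEquiv.mul_apply, ← g.1.dist_eq q (y.1 q)]
    exact (abs_dist_sub_le _ _ _).trans (hg q (by rw [dist_self]; positivity))
  refine _root_.abs_convSquare_second_difference_le (hΓ.finite_support_orbitTent hκ)
    (by positivity) (fun y hy => ?_) (fun y _ => ?_) fun y hy => ?_
  · rw [hΓ.mem_orbitBall, not_le] at hy
    have := abs_le.1 (hgy y)
    rw [orbitTent_eq_zero hκ (by linarith), orbitTent_eq_zero hκ (by linarith)]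
  · refine (abs_orbitTent_sub_le hκ _ _).trans ?_
    gcongr
    exact hgy y
  · refine (abs_orbitTent_sub_le hκ _ _).trans ?_
    gcongr
    rw [dist_inv_mul_apply, dist_inv_mul_apply, Subgroup.coe_mul, IsometryEquiv.mul_apply,
      ← h.1.dist_eq (y.1 q) (k.1 q)]
    exact (abs_dist_sub_le _ _ _).trans
      (hh _ (by rw [dist_comm]; exact hΓ.mem_orbitBall.1 hy))

-- The second differences in the directions `g, h` and `h, g` at `(h * g)⁻¹ * k` share all
-- their terms except the values at `⁅g, h⁆ * k` and at `k`.
theorem IsDiscreteSubgroup.convSquare_sub_commutator_mul_le (hΓ : IsDiscreteSubgroup Γ)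
    (hκ : 0 < κ) (hg : MovesLE g.1 q (2 * κ) a) (hh : MovesLE h.1 q (2 * κ) b) (ha : a ≤ κ)
    (hb : b ≤ κ) (k : ↥Γ) :
    convSquare (orbitTent Γ q κ) k - convSquare (orbitTent Γ q κ) (⁅g, h⁆ * k) ≤
      2 * ((hΓ.orbitBall q (2 * κ)).card * (a / κ * (b / κ))) := by
  have hgh := abs_le.1 (hΓ.abs_convSquare_second_difference_le hκ hg hh ha ((h * g)⁻¹ * k))
  have hhg := abs_le.1 (hΓ.abs_convSquare_second_difference_le hκ hh hg hb ((h * g)⁻¹ * k))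
  rw [show g * (h * ((h * g)⁻¹ * k)) = ⁅g, h⁆ * k by rw [commutatorElement_def]; group] at hgh
  rw [show h * (g * ((h * g)⁻¹ * k)) = k by group, mul_comm (b / κ)] at hhg
  linarith

theorem IsDiscreteSubgroup.convSquare_sub_commutator_pow_le (hΓ : IsDiscreteSubgroup Γ)
    (hκ : 0 < κ) (hg : MovesLE g.1 q (2 * κ) a) (hh : MovesLE h.1 q (2 * κ) b) (ha : a ≤ κ)
    (hb : b ≤ κ) (n : ℕ) :
    convSquare (orbitTent Γ q κ) 1 - convSquare (orbitTent Γ q κ) (⁅g, h⁆ ^ n) ≤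
      n * (2 * ((hΓ.orbitBall q (2 * κ)).card * (a / κ * (b / κ)))) := by
  induction n with
  | zero => simp
  | succ n ih =>
    have hstep := hΓ.convSquare_sub_commutator_mul_le hκ hg hh ha hb (⁅g, h⁆ ^ n)
    rw [← pow_succ'] at hstep
    push_cast
    linarith

theorem IsDiscreteSubgroup.sq_le_of_two_mul_le_dist_commutator_pow (hΓ : IsDiscreteSubgroup Γ)
    (hκ : 0 < κ) {N : ℕ} (hN : HasPackingBound X (2 * κ) (κ / 2) N)
    (hg : MovesLE g.1 q (2 * κ) a) (hh : MovesLE h.1 q (2 * κ) b) (ha : a ≤ κ) (hb : b ≤ κ)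
    {n : ℕ} (hn : 2 * κ ≤ dist q ((⁅g, h⁆ ^ n).1 q)) :
    κ ^ 2 ≤ 8 * N * n * (a * b) := by
  have ha0 : 0 ≤ a := hg.nonneg (by positivity)
  have hb0 : 0 ≤ b := hh.nonneg (by positivity)
  have hupper := hΓ.convSquare_sub_commutator_pow_le hκ hg hh ha hb n
  rw [convSquare_orbitTent_eq_zero hκ hn, sub_zero] at hupper
  have hcard : ((hΓ.orbitBall q (2 * κ)).card : ℝ) ≤ N * (hΓ.orbitBall q (κ / 2)).card := by
    exact_mod_cast hΓ.card_orbitBall_le q (by positivity) hN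
  have hpos : (0 : ℝ) < (hΓ.orbitBall q (κ / 2)).card := by
    have h1 : 1 ∈ hΓ.orbitBall q (κ / 2) :=
      hΓ.mem_orbitBall.2 <| by
        rw [Subgroup.coe_one, IsometryEquiv.coe_one, id, dist_self]
        positivity
    exact_mod_cast Finset.card_pos.2 ⟨1, h1⟩
  set B : ℝ := ((hΓ.orbitBall q (κ / 2)).card : ℝ)
  have hbound : B / 4 ≤ n * (2 * (N * B * (a * b))) / κ ^ 2 :=
    calc B / 4 ≤ n * (2 * ((hΓ.orbitBall q (2 * κ)).card * (a / κ * (b / κ)))) :=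
          (hΓ.card_orbitBall_div_four_le_convSquare_one hκ).trans hupper
      _ ≤ n * (2 * (N * B * (a / κ * (b / κ)))) := by gcongr
      _ = n * (2 * (N * B * (a * b))) / κ ^ 2 := by field_simp
  rw [le_div_iff₀ (by positivity)] at hbound
  exact le_of_mul_le_mul_left (by linarith) hpos

end OrbitCounting

section VirtuallyNilpotent

open scoped commutatorElement

variable {G : Type*} [Group G]

theorem IsVirtuallyNilpotent.of_injective {G' : Type*} [Group G'] (h : IsVirtuallyNilpotent G')
    (f : G →* G') (hf : Function.Injective f) : IsVirtuallyNilpotent G := by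
  obtain ⟨K, hK, hKn⟩ := h
  refine ⟨K.comap f, ⟨?_⟩, ?_⟩
  · rw [Subgroup.index_comap]
    exact fun h0 => hK.index_ne_zero (Subgroup.index_eq_zero_of_relIndex_eq_zero h0)
  · refine Subgroup.isNilpotent_of_ker_le_center (f.subgroupComap K) ?_
    rw [(MonoidHom.ker_eq_bot_iff _).2 fun x y hxy =>
      Subtype.ext (hf (congrArg Subtype.val hxy))]
    exact bot_le

theorem IsVirtuallyNilpotent.of_finiteIndex {H : Subgroup G} [hH : H.FiniteIndex]
    (h : IsVirtuallyNilpotent ↥H) : IsVirtuallyNilpotent G := by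
  obtain ⟨K, hK, hKn⟩ := h
  refine ⟨K.map H.subtype, ⟨?_⟩, ?_⟩
  · rw [Subgroup.index_map_subtype]
    exact mul_ne_zero hK.index_ne_zero hH.index_ne_zero
  · exact Group.nilpotent_of_mulEquiv (K.equivMapOfInjective H.subtype H.subtype_injective)

theorem IsNonElementary.not_isVirtuallyNilpotent {X : Type*} [MetricSpace X]
    {Γ : Subgroup (X ≃ᵢ X)} (h : IsNonElementary Γ) : ¬ IsVirtuallyNilpotent ↥Γ := by
  obtain ⟨a, b, ha, hb, hab⟩ := h
  have hle : Subgroup.closure {a, b} ≤ Γ :=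
    (Subgroup.closure_le _).2 (Set.insert_subset ha (Set.singleton_subset_iff.2 hb))
  exact fun hΓ => hab (hΓ.of_injective (Subgroup.inclusion hle) (Subgroup.inclusion_injective hle))

theorem commutatorElement_mem_of_closure_eq_top {T : Set G} (hT : Subgroup.closure T = ⊤)
    (N : Subgroup G) [N.Normal] {w : G} (hw : ∀ t ∈ T, ⁅t, w⁆ ∈ N) (g : G) : ⁅w, g⁆ ∈ N := by
  have hiff (x y : G) : ⁅x, y⁆ ∈ N ↔ Commute (QuotientGroup.mk' N x) (QuotientGroup.mk' N y) := by
    rw [← commutatorElement_eq_one_iff_commute, ← map_commutatorElement, QuotientGroup.mk'_apply,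
      QuotientGroup.eq_one_iff]
  have hcentral : Subgroup.closure T ≤
      (Subgroup.centralizer {QuotientGroup.mk' N w}).comap (QuotientGroup.mk' N) :=
    (Subgroup.closure_le _).2 fun t ht =>
      Subgroup.mem_centralizer_singleton_iff.2 ((hiff t w).1 (hw t ht))
  rw [hT] at hcentral
  exact (hiff w g).2
    (Subgroup.mem_centralizer_singleton_iff.1 (hcentral (Subgroup.mem_top g))).symm

theorem isNilpotent_of_commutatorElement_mem {T : Set G} (hT : Subgroup.closure T = ⊤)
    {W : ℕ → Set G} (hTW : T ⊆ W 0) (hW : ∀ k, ∀ t ∈ T, ∀ w ∈ W k, ⁅t, w⁆ ∈ W (k + 1)) {K : ℕ}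
    (hK : W K ⊆ {1}) : Group.IsNilpotent G := by
  have hcentral : ∀ i k, k + i = K → W k ⊆ Subgroup.upperCentralSeries G i := fun i => by
    induction i with
    | zero =>
      intro k hk w hw
      obtain rfl : k = K := hk
      rw [Set.mem_singleton_iff.1 (hK hw)]
      exact Subgroup.one_mem _
    | succ i ih =>
      intro k hk w hw
      exact Subgroup.mem_upperCentralSeries_succ_iff.2 <| commutatorElement_mem_of_closure_eq_top hT
        _ fun t ht => ih (k + 1) (by omega) (hW k t ht w hw)
  refine ⟨K, ?_⟩
  rw [eq_top_iff, ← hT, Subgroup.closure_le]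
  exact hTW.trans (hcentral K 0 (zero_add K))

-- The centralizer of `F` has finite index and its intersection with `F` is central.
theorem isVirtuallyNilpotent_of_isNilpotent_quotient (F : Subgroup G) [F.Normal] [Finite ↥F]
    [Group.IsNilpotent (G ⧸ F)] : IsVirtuallyNilpotent G := by
  have : Finite (MulAut ↥F) := Finite.of_injective _ DFunLike.coe_injective
  let Z : Subgroup G := (MulAut.conjNormal (H := F)).ker
  refine ⟨Z, Subgroup.finiteIndex_ker _,
    Subgroup.isNilpotent_of_ker_le_center ((QuotientGroup.mk' F).comp Z.subtype) ?_⟩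
  rintro x hx
  have hxF : x.1 ∈ F := (QuotientGroup.eq_one_iff _).1 hx
  refine Subgroup.mem_center_iff.2 fun z => Subtype.ext ?_
  have hz : MulAut.conjNormal (H := F) z.1 = 1 := z.2
  have hconj := MulAut.conjNormal_apply (H := F) z.1 ⟨x.1, hxF⟩
  rw [hz] at hconj
  exact (mul_inv_eq_iff_eq_mul.1 hconj.symm)

theorem isVirtuallyNilpotent_of_commutatorElement_mem {T : Set G}
    (hT : Subgroup.closure T = ⊤) (F : Subgroup G) [F.Normal] [Finite ↥F] {W : ℕ → Set G}
    (hTW : T ⊆ W 0) (hW : ∀ k, ∀ t ∈ T, ∀ w ∈ W k, ⁅t, w⁆ ∈ W (k + 1)) {K : ℕ}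
    (hK : W K ⊆ F) : IsVirtuallyNilpotent G := by
  have hgen : Subgroup.closure (QuotientGroup.mk' F '' T) = ⊤ := by
    rw [← MonoidHom.map_closure, hT,
      Subgroup.map_top_of_surjective _ (QuotientGroup.mk'_surjective F)]
  have : Group.IsNilpotent (G ⧸ F) := by
    refine isNilpotent_of_commutatorElement_mem hgen (W := fun k => QuotientGroup.mk' F '' W k)
      (K := K) (Set.image_mono hTW) ?_ ?_
    · rintro k _ ⟨t, ht, rfl⟩ _ ⟨w, hw, rfl⟩
      exact ⟨_, hW k t ht w hw, map_commutatorElement _ _ _⟩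
    · rintro _ ⟨w, hw, rfl⟩
      exact (QuotientGroup.eq_one_iff w).2 (hK hw)
  exact isVirtuallyNilpotent_of_isNilpotent_quotient F

end VirtuallyNilpotent

section WordBall

variable {G : Type*} [Group G] {S : Set G} {m n : ℕ} {g h : G}

/-- The elements which are products of at most `n` elements of `S`. -/
def wordBall (S : Set G) (n : ℕ) : Set G :=
  {g | ∃ L : List G, L.length ≤ n ∧ (∀ u ∈ L, u ∈ S) ∧ g = L.prod}

theorem one_mem_wordBall : 1 ∈ wordBall S n := ⟨[], by simp⟩

theorem mem_wordBall_one (hg : g ∈ S) : g ∈ wordBall S 1 :=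
  ⟨[g], by simp, by simpa using hg, by simp⟩

theorem wordBall_mono (S : Set G) : Monotone (wordBall S) :=
  fun _ _ hmn _ ⟨L, hlen, hmem, hprod⟩ => ⟨L, hlen.trans hmn, hmem, hprod⟩

theorem mul_mem_wordBall (hg : g ∈ wordBall S m) (hh : h ∈ wordBall S n) :
    g * h ∈ wordBall S (m + n) := by
  obtain ⟨L, hlen, hmem, rfl⟩ := hg
  obtain ⟨L', hlen', hmem', rfl⟩ := hh
  refine ⟨L ++ L', by rw [List.length_append]; omega, fun u hu => ?_, by rw [List.prod_append]⟩
  exact (List.mem_append.1 hu).elim (hmem u) (hmem' u)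

theorem inv_mem_wordBall (hS : ∀ s ∈ S, s⁻¹ ∈ S) (hg : g ∈ wordBall S n) :
    g⁻¹ ∈ wordBall S n := by
  obtain ⟨L, hlen, hmem, rfl⟩ := hg
  refine ⟨(L.map (·⁻¹)).reverse, by simpa using hlen, fun u hu => ?_,
    by rw [List.prod_inv_reverse]⟩
  obtain ⟨v, hv, rfl⟩ := List.mem_map.1 (List.mem_reverse.1 hu)
  exact hS v (hmem v hv)

theorem pow_mem_wordBall (hg : g ∈ wordBall S m) (n : ℕ) : g ^ n ∈ wordBall S (n * m) := by
  induction n with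
  | zero => simpa using one_mem_wordBall
  | succ n ih =>
    rw [pow_succ, Nat.succ_mul]
    exact mul_mem_wordBall ih hg

theorem prod_map_mem_wordBall {ι : Type*} {c : ι → G} (hc : ∀ i, c i ∈ wordBall S n)
    (L : List ι) : (L.map c).prod ∈ wordBall S (L.length * n) := by
  induction L with
  | nil => exact one_mem_wordBall
  | cons i L ih =>
    rw [List.map_cons, List.prod_cons, List.length_cons, Nat.succ_mul, add_comm]
    exact mul_mem_wordBall (hc i) ih

theorem forall_of_one_of_mul_left (hS : ∀ s ∈ S, s⁻¹ ∈ S) (hcl : Subgroup.closure S = ⊤)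
    {p : G → Prop} (one : p 1) (mul_left : ∀ s ∈ S, ∀ g, p g → p (s * g)) (g : G) : p g :=
  Subgroup.closure_induction_left (p := fun g _ => p g) one (fun s hs g _ => mul_left s hs g)
    (fun s hs g _ => mul_left s⁻¹ (hS s hs) g) (hcl ▸ Subgroup.mem_top g)

theorem exists_lt_eq_succ_of_ncard_le {α : Type*} {C : ℕ → Set α} (hC : Monotone C)
    (h0 : (C 0).Nonempty) (hfin : (C n).Finite) (hn : (C n).ncard ≤ n) :
    ∃ j < n, C j = C (j + 1) := by
  by_contra! hne
  have hcard : ∀ j ≤ n, j + 1 ≤ (C j).ncard := fun j => by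
    induction j with
    | zero => exact fun hj => (Set.ncard_pos (hfin.subset (hC hj))).2 h0
    | succ j ih =>
      intro hj
      have hlt : (C j).ncard < (C (j + 1)).ncard :=
        Set.ncard_lt_ncard ((hC (Nat.le_succ j)).ssubset_of_ne (hne j hj)) (hfin.subset (hC hj))
      have := ih (by omega)
      omega
  exact absurd (hcard n le_rfl) (by omega)

theorem mk_mem_image_wordBall_of_eq_succ (hS : ∀ s ∈ S, s⁻¹ ∈ S) (hcl : Subgroup.closure S = ⊤)
    {H : Subgroup G} (hn : ((↑) : G → G ⧸ H) '' wordBall S n = (↑) '' wordBall S (n + 1)) (g : G) :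
    (g : G ⧸ H) ∈ ((↑) : G → G ⧸ H) '' wordBall S n := by
  refine forall_of_one_of_mul_left (p := fun g => (g : G ⧸ H) ∈ (↑) '' wordBall S n) hS hcl
    ⟨1, one_mem_wordBall, rfl⟩ ?_ g
  rintro s hs g ⟨w, hw, hwg⟩
  rw [hn, add_comm]
  exact ⟨s * w, mul_mem_wordBall (mem_wordBall_one hs) hw,
    QuotientGroup.eq.2 (by simpa [mul_assoc] using QuotientGroup.eq.1 hwg)⟩

-- The images in `G ⧸ H` of the word balls of radii `0, …, card E` cannot all be distinct, and they
-- are stationary as soon as two consecutive ones coincide.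
theorem finiteIndex_of_wordBall (hS : ∀ s ∈ S, s⁻¹ ∈ S) (hcl : Subgroup.closure S = ⊤)
    (H : Subgroup G) {α : Type*} (E : Finset α) (f : G → α)
    (hfE : ∀ g ∈ wordBall S E.card, f g ∈ E)
    (hf : ∀ g ∈ wordBall S E.card, ∀ h ∈ wordBall S E.card, f g = f h → g⁻¹ * h ∈ H) :
    H.FiniteIndex := by
  let C : ℕ → Set (G ⧸ H) := fun j => (↑) '' wordBall S j
  have hC : Monotone C := fun i j hij => Set.image_mono (wordBall_mono S hij)
  have hrep : ∀ q ∈ C E.card, ∃ g ∈ wordBall S E.card, (g : G ⧸ H) = q := fun q hq => hq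
  choose! e he heq using hrep
  have hmaps : Set.MapsTo (f ∘ e) (C E.card) (E : Set α) := fun q hq => hfE _ (he q hq)
  have hinj : Set.InjOn (f ∘ e) (C E.card) := fun q hq q' hq' h => by
    rw [← heq q hq, ← heq q' hq']
    exact QuotientGroup.eq.2 (hf _ (he q hq) _ (he q' hq') h)
  have hfin : (C E.card).Finite := Set.Finite.of_injOn hmaps hinj E.finite_toSet
  have hcard := Set.ncard_le_ncard_of_injOn _ hmaps hinj E.finite_toSet
  rw [Set.ncard_coe_finset] at hcard
  obtain ⟨j, hj, hjC⟩ := exists_lt_eq_succ_of_ncard_le hC ⟨_, 1, one_mem_wordBall, rfl⟩ hfin hcard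
  have : Finite (G ⧸ H) := Set.finite_univ_iff.1 <| (hfin.subset (hC hj.le)).subset fun q _ => by
    obtain ⟨g, rfl⟩ := QuotientGroup.mk_surjective q
    exact mk_mem_image_wordBall_of_eq_succ hS hcl hjC g
  exact Subgroup.finiteIndex_of_finite_quotient

end WordBall

section GoodRadius

variable {X : Type*} [MetricSpace X] {σ : X → X → ℝ → X} {Γ : Subgroup (X ≃ᵢ X)} {x : X} {r l : ℝ}

/-- A scale `r` at which almost fixing the ball of radius `r` propagates to a bound for the
displacement on the ball of radius `r + 2 * l`, for all elements of `Γ`. -/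
def IsGoodRadius (Γ : Subgroup (X ≃ᵢ X)) (x : X) (r l : ℝ) : Prop :=
  ∀ u ∈ Γ, MovesLE u x r (l / 48) → MovesLE u x (r + 2 * l) (l / 8)

-- `v` moves a point `y` at distance at most `2 * l` of the ball more than an isometry `v'` almost
-- fixing the larger ball; prolonging a segment from the ball through `y` to length `1` turns the
-- gap between `v` and `v'`, proportional to `l` at `y`, into a definite one at the end point `z`.
theorem IsGCB.exists_separating_of_not_isGoodRadius (hσ : IsGCB σ)
    (hΓσ : ∀ g ∈ Γ, IsSigmaIsometry σ g) (hl : 0 < l) (hr : 0 ≤ r) (hrl : r + 2 * l ≤ 1)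
    (hbad : ¬ IsGoodRadius Γ x r l) :
    ∃ v ∈ Γ, MovesLE v x r (l / 48) ∧ ∃ z, dist z x ≤ 2 ∧
      ∀ v' ∈ Γ, MovesLE v' x (r + 2 * l) (l / 48) → 1 / 32 ≤ dist (v z) (v' z) := by
  simp only [IsGoodRadius, MovesLE, not_forall, not_le] at hbad
  obtain ⟨v, hv, hvr, y, hy, hyv⟩ := hbad
  obtain ⟨y', hxy', hy'y⟩ := hσ.isGeodesicSpace.exists_dist_le_dist_le x y hr
    (by positivity : 0 ≤ 2 * l) (by rwa [dist_comm])
  obtain ⟨z, hy'z, -, hyz⟩ := hσ.exists_extension y' y one_pos (by linarith)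
  rw [div_one] at hyz
  refine ⟨v, hv, hvr, z, by linarith [dist_triangle z y' x, dist_comm z y', dist_comm x y'],
    fun v' hv' hv'r => ?_⟩
  have hgap_near : dist (v y') (v' y') ≤ l / 24 := by
    rw [dist_comm] at hxy'
    linarith [dist_triangle_left (v y') (v' y') y', hvr y' hxy', hv'r y' (by linarith)]
  have hgap_y : 5 * l / 48 ≤ dist (v y) (v' y) := by
    linarith [dist_triangle_right y (v y) (v' y), hv'r y hy]
  have hconv := hσ.dist_apply_apply_le (hΓσ v hv) (hΓσ v' hv') y' z (t := dist y' y)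
    ⟨dist_nonneg, by linarith⟩
  rw [hyz] at hconv
  have hgap_le : (1 - dist y' y) * dist (v y') (v' y') ≤ dist (v y') (v' y') :=
    mul_le_of_le_one_left dist_nonneg (by linarith [dist_nonneg (x := y') (y := y)])
  have hgap_z : dist y' y * dist (v z) (v' z) ≤ 2 * l * dist (v z) (v' z) := by gcongr
  nlinarith

theorem HasPackingBound.card_le_of_separated {ι : Type*} [LinearOrder ι] {R c s ε : ℝ}
    {N₁ N₂ : ℕ} (h₁ : HasPackingBound X R s N₁) (h₂ : HasPackingBound X (R + c) ε N₂) (hs : 0 ≤ s)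
    (hε : 0 ≤ ε) {I : Finset ι} (v : ι → X ≃ᵢ X) (z : ι → X) (hv : ∀ i ∈ I, dist x (v i x) ≤ c)
    (hz : ∀ i ∈ I, dist (z i) x ≤ R)
    (hsep : ∀ i ∈ I, ∀ j ∈ I, i < j → 2 * s + ε < dist (v i (z i)) (v j (z i))) :
    I.card ≤ N₂ * N₁ := by
  classical
  have : Nonempty X := ⟨x⟩
  obtain ⟨Z, hZN, hZ, hnear⟩ := h₁.exists_net hs (x := x) (Y := z '' I) (by
    rintro _ ⟨i, hi, rfl⟩
    exact hz i hi)
  choose! f hfZ hf using fun i (hi : i ∈ I) => hnear _ ⟨i, hi, rfl⟩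
  refine (Finset.card_le_mul_card_image_of_maps_to hfZ N₂ fun w hw => ?_).trans
    (Nat.mul_le_mul_left _ hZN)
  have hlt : ∀ i ∈ I, f i = w → ∀ j ∈ I, i < j → ε < dist (v i w) (v j w) := by
    rintro i hi rfl j hj hij
    have htri := dist_triangle4 (v i (z i)) (v i (f i)) (v j (f i)) (v j (z i))
    rw [(v i).dist_eq, dist_comm (v j (f i)), (v j).dist_eq] at htri
    linarith [hsep i hi j hj hij, hf i hi]
  refine h₂.card_le_of_pairwise_lt_dist hε (x := x) (p := fun i => v i w) (fun i hi => ?_)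
    fun i hi j hj hij => ?_
  · obtain ⟨k, hk, hkw⟩ := hZ hw
    have hwx : dist w x ≤ R := hkw ▸ hz k hk
    rw [← (v i).dist_eq] at hwx
    linarith [dist_triangle_right (v i w) x (v i x), hv i (Finset.mem_filter.1 hi).1]
  · obtain ⟨hi, hiw⟩ := Finset.mem_filter.1 hi
    obtain ⟨hj, hjw⟩ := Finset.mem_filter.1 hj
    rcases lt_or_gt_of_ne hij with h | h
    · exact hlt i hi hiw j hj h
    · exact dist_comm (v j w) _ ▸ hlt j hj hjw i hi h

theorem IsGCB.exists_isGoodRadius (hσ : IsGCB σ) (hΓσ : ∀ g ∈ Γ, IsSigmaIsometry σ g)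
    {N₁ N₂ : ℕ} (h₁ : HasPackingBound X 2 (1 / 512) N₁)
    (h₂ : HasPackingBound X (2 + 1) (1 / 64) N₂) (x : X) (hl : 0 < l)
    (hNl : 2 * (N₂ * N₁ + 1) * l ≤ 1) : ∃ r, 0 ≤ r ∧ r + 2 * l ≤ 1 ∧ IsGoodRadius Γ x r l := by
  by_contra! hbad
  have hscale : ∀ i < N₂ * N₁ + 1, 2 * (i : ℝ) * l + 2 * l ≤ 1 := fun i hi => by
    have : (i : ℝ) + 1 ≤ N₂ * N₁ + 1 := by exact_mod_cast hi
    nlinarith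
  have : Nonempty X := ⟨x⟩
  choose! v hv hvr z hz hsep using fun i (hi : i < N₂ * N₁ + 1) =>
    hσ.exists_separating_of_not_isGoodRadius hΓσ hl (by positivity) (hscale i hi)
      (hbad (2 * (i : ℝ) * l) (by positivity) (hscale i hi))
  have hcard := h₁.card_le_of_separated h₂ (by norm_num) (by norm_num)
    (I := Finset.range (N₂ * N₁ + 1)) (x := x) v z (fun i hi => ?_)
    (fun i hi => hz i (Finset.mem_range.1 hi)) fun i hi j hj hij => ?_
  · rw [Finset.card_range] at hcard
    omega
  · have hi' := Finset.mem_range.1 hi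
    have hi0 : 0 ≤ 2 * (i : ℝ) * l := by positivity
    exact (hvr i hi' x (by rwa [dist_self])).trans (by linarith [hscale i hi'])
  · have hj' := Finset.mem_range.1 hj
    have hij' : (i : ℝ) + 1 ≤ j := by exact_mod_cast hij
    have := hsep i (Finset.mem_range.1 hi) (v j) (hv j hj')
      ((hvr j hj').mono (by nlinarith) le_rfl)
    linarith

theorem IsGoodRadius.apply_eq_self (hgood : IsGoodRadius Γ x r l) (hσ : IsGCB σ)
    (hΓσ : ∀ g ∈ Γ, IsSigmaIsometry σ g) (hl : 0 < l) {f : X ≃ᵢ X} (hf : f ∈ Γ)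
    (hfix : ∀ p, dist p x ≤ r → f p = p) {p : X} (hp : dist p x ≤ r + l) : f p = p := by
  refine hσ.apply_eq_self_of_forall_pow_two_pow (hΓσ f hf) hl (fun j => ?_) hp
  refine (hgood (f ^ 2 ^ j) (Γ.pow_mem hf _) fun y hy => ?_).mono (by linarith) le_rfl
  refine (dist_self_pow_le f (2 ^ j) y).trans ?_
  rw [hfix y hy, dist_self, mul_zero]
  positivity

theorem IsGoodRadius.movesLE_add (hgood : IsGoodRadius Γ x r l) (hσ : IsGCB σ)
    (hΓσ : ∀ g ∈ Γ, IsSigmaIsometry σ g) (hl : 0 < l) (hr : 0 ≤ r) {u : X ≃ᵢ X} (hu : u ∈ Γ)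
    {ε : ℝ} (hlarge : MovesLE u x (r + 2 * l) (l / 8)) (hsmall : MovesLE u x r ε) :
    MovesLE u x (r + l) (24 * ε) := by
  have hε := hsmall.nonneg hr
  have hrl : r + 2 * l = r + l + l := by ring
  rw [hrl] at hlarge
  rcases hσ.forall_apply_eq_self_or_exists_not_movesLE (hΓσ u hu) hl hlarge with h | ⟨J, hJ, h⟩
  · intro p hp
    rw [h p hp, dist_self]
    positivity
  · refine h.mono le_rfl ?_
    by_contra! hlt
    rw [← hrl] at hJ
    refine hJ (hgood _ (Γ.pow_mem hu _) ((hsmall.pow _).mono le_rfl ?_))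
    rw [lt_div_iff₀ (by positivity)] at hlt
    push_cast
    linarith

open scoped commutatorElement

theorem MovesLE.commutatorElement {g h : X ≃ᵢ X} {a b : ℝ} (hg : MovesLE g x r a)
    (hh : MovesLE h x r b) : MovesLE ⁅g, h⁆ x r (2 * a + 2 * b) := fun p hp => by
  have h₁ := dist_self_mul_le (g * h * g⁻¹) h⁻¹ p
  have h₂ := dist_self_mul_le (g * h) g⁻¹ p
  have h₃ := dist_self_mul_le g h p
  rw [dist_self_inv] at h₁ h₂
  rw [commutatorElement_def]
  linarith [hg p hp, hh p hp]

-- If iterated squares of the commutator escape, apply the counting estimate at a point which is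
-- moved a definite amount by the first one that does.
theorem IsGCB.movesLE_commutatorElement (hσ : IsGCB σ) (hΓσ : ∀ g ∈ Γ, IsSigmaIsometry σ g)
    (hΓ : IsDiscreteSubgroup Γ) {a b : ℝ} {N : ℕ} (hl : 0 < l) (hr : 0 ≤ r)
    (hN : HasPackingBound X (2 * (l / 32)) (l / 32 / 2) N) {g h : X ≃ᵢ X} (hg : g ∈ Γ)
    (hh : h ∈ Γ) (hga : MovesLE g x (r + l) a) (hhb : MovesLE h x (r + l) b)
    (hab : 2 * a + 2 * b ≤ l / 16) :
    MovesLE ⁅g, h⁆ x r (2048 * N * (a * b) / l) := by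
  have ha := hga.nonneg (by linarith)
  have hb := hhb.nonneg (by linarith)
  have hwΓ : ⁅g, h⁆ ∈ Γ :=
    Γ.mul_mem (Γ.mul_mem (Γ.mul_mem hg hh) (Γ.inv_mem hg)) (Γ.inv_mem hh)
  rcases hσ.forall_apply_eq_self_or_exists_not_movesLE (hΓσ _ hwΓ) (half_pos hl)
    ((hga.commutatorElement hhb).mono (r' := r + l / 2) (by linarith) (by linarith))
    with hfix | ⟨J, hJ, hsmall⟩
  · intro p hp
    rw [hfix p hp, dist_self]
    positivity
  · simp only [MovesLE, not_forall, not_le] at hJ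
    obtain ⟨q, hq, hqJ⟩ := hJ
    have hbound := hΓ.sq_le_of_two_mul_le_dist_commutator_pow (κ := l / 32) (by positivity) hN
      (g := ⟨g, hg⟩) (h := ⟨h, hh⟩) (hga.mono_center (by linarith))
      (hhb.mono_center (by linarith)) (by linarith) (by linarith) (n := 2 ^ J)
      (le_trans (by linarith) hqJ.le)
    refine hsmall.mono le_rfl ?_
    push_cast at hbound
    rw [le_div_iff₀ hl, div_mul_eq_mul_div, div_le_iff₀ (by positivity)]
    linarith

end GoodRadius

section MargulisLemma

variable {X : Type*} [MetricSpace X] {σ : X → X → ℝ → X} {Γ : Subgroup (X ≃ᵢ X)} {x : X}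
  {r l c : ℝ} {N : ℕ}

/-- The pointwise stabilizer in `Γ` of a closed ball. -/
def ballFixator (Γ : Subgroup (X ≃ᵢ X)) (x : X) (r : ℝ) : Subgroup (X ≃ᵢ X) where
  carrier := {f | f ∈ Γ ∧ ∀ p, dist p x ≤ r → f p = p}
  mul_mem' := fun ha hb => ⟨Γ.mul_mem ha.1 hb.1, fun p hp => by
    rw [IsometryEquiv.mul_apply, hb.2 p hp, ha.2 p hp]⟩
  one_mem' := ⟨Γ.one_mem, fun _ _ => rfl⟩
  inv_mem' := fun {a} ha => ⟨Γ.inv_mem ha.1, fun p hp => by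
    conv_lhs => rw [← ha.2 p hp]
    exact IsometryEquiv.inv_apply_self a p⟩

theorem IsDiscreteSubgroup.finite_ballFixator (hΓ : IsDiscreteSubgroup Γ) (x : X) (hr : 0 ≤ r) :
    Finite ↥(ballFixator Γ x r) := by
  refine Set.Finite.to_subtype ((hΓ x 0).subset fun f hf => ⟨hf.1, ?_⟩)
  rw [hf.2 x (by rwa [dist_self]), dist_self]

theorem IsDiscreteSubgroup.exists_mem_ballFixator_of_movesLE (hΓ : IsDiscreteSubgroup Γ) (x : X)
    (hr : 0 ≤ r) : ∃ ε > 0, ∀ w ∈ Γ, MovesLE w x r ε → w ∈ ballFixator Γ x r := by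
  have hmem : ∀ w ∈ {w | w ∈ Γ ∧ dist x (w x) ≤ 1}, ∀ᶠ ε in nhdsWithin 0 (Set.Ioi 0),
      MovesLE w x r ε → w ∈ ballFixator Γ x r := by
    rintro w ⟨hw, -⟩
    by_cases hfix : ∀ p, dist p x ≤ r → w p = p
    · exact Eventually.of_forall fun _ _ => ⟨hw, hfix⟩
    push Not at hfix
    obtain ⟨p, hp, hpw⟩ := hfix
    filter_upwards [Ioo_mem_nhdsGT (dist_pos.2 hpw.symm)] with ε hε hwε
    exact absurd (hwε p hp) (not_le.2 hε.2)
  obtain ⟨ε, hε, hε1⟩ :=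
    (((hΓ x 1).eventually_all.2 hmem).and (Ioc_mem_nhdsGT one_pos)).exists
  exact ⟨ε, hε1.1, fun w hw hwε =>
    hε w ⟨hw, (hwε x (by rwa [dist_self])).trans hε1.2⟩ hwε⟩

theorem normal_subgroupOf_closure {G : Type*} [Group G] {F : Subgroup G} {T : Set G}
    (hTinv : ∀ t ∈ T, t⁻¹ ∈ T) (hconj : ∀ t ∈ T, ∀ f ∈ F, t * f * t⁻¹ ∈ F) :
    (F.subgroupOf (Subgroup.closure T)).Normal := by
  refine Subgroup.normal_subgroupOf_of_le_normalizer ((Subgroup.closure_le _).2 fun t ht => ?_)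
  refine Subgroup.mem_normalizer_iff.2 fun f => ⟨hconj t ht f, fun hf => ?_⟩
  simpa [mul_assoc] using hconj t⁻¹ (hTinv t ht) _ hf

theorem IsGoodRadius.conj_mem_ballFixator (hgood : IsGoodRadius Γ x r l) (hσ : IsGCB σ)
    (hΓσ : ∀ g ∈ Γ, IsSigmaIsometry σ g) (hl : 0 < l) {t f : X ≃ᵢ X} (ht : t ∈ Γ)
    (htl : MovesLE t x r l) (hf : f ∈ ballFixator Γ x r) : t * f * t⁻¹ ∈ ballFixator Γ x r := by
  refine ⟨Γ.mul_mem (Γ.mul_mem ht hf.1) (Γ.inv_mem ht), fun p hp => ?_⟩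
  have hball : dist (t⁻¹ p) x ≤ r + l := by
    linarith [dist_triangle_left (t⁻¹ p) x p, htl.inv p hp]
  rw [IsometryEquiv.mul_apply, IsometryEquiv.mul_apply,
    hgood.apply_eq_self hσ hΓσ hl hf.1 hf.2 hball, IsometryEquiv.apply_inv_self]

/-- The elements of `Γ` of displacement at most `ε` on the ball of radius `r` and of displacement
at most `l / 8` on the ball of radius `r + 2 * l`: the terms of the descending sequence of sets in
the proof of the Margulis lemma. -/
def almostFixing (Γ : Subgroup (X ≃ᵢ X)) (x : X) (r l ε : ℝ) : Set (X ≃ᵢ X) :=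
  {w | w ∈ Γ ∧ MovesLE w x (r + 2 * l) (l / 8) ∧ MovesLE w x r ε}

open scoped commutatorElement

theorem IsGoodRadius.commutatorElement_mem_almostFixing (hgood : IsGoodRadius Γ x r l)
    (hσ : IsGCB σ) (hΓσ : ∀ g ∈ Γ, IsSigmaIsometry σ g) (hΓ : IsDiscreteSubgroup Γ) (hl : 0 < l)
    (hr : 0 ≤ r) (hrl : r + 2 * l ≤ 1) (hN : HasPackingBound X (2 * (l / 32)) (l / 32 / 2) N)
    (hcl : 1000 * c ≤ l) (hcN : 100000 * (N * c) ≤ l) {t w : X ≃ᵢ X} (ht : t ∈ Γ)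
    (htc : MovesLE t x 2 c) {ε : ℝ} (hε : ε ≤ c) (hw : w ∈ almostFixing Γ x r l ε) :
    ⁅t, w⁆ ∈ almostFixing Γ x r l (ε / 2) := by
  obtain ⟨hwΓ, hwl, hwε⟩ := hw
  have hε0 := hwε.nonneg hr
  refine ⟨Γ.mul_mem (Γ.mul_mem (Γ.mul_mem ht hwΓ) (Γ.inv_mem ht)) (Γ.inv_mem hwΓ),
    fun p hp => ?_, ?_⟩
  · have htw := dist_self_mul_le t (w * t⁻¹ * w⁻¹) p
    rw [dist_self_conj, dist_self_inv] at htw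
    rw [commutatorElement_def, mul_assoc t w, mul_assoc t]
    linarith [htc p (by linarith), htc (w⁻¹ p)
      (by linarith [dist_triangle_left (w⁻¹ p) x p, hwl.inv p hp])]
  · refine (hσ.movesLE_commutatorElement hΓσ hΓ hl hr hN ht hwΓ
      (htc.mono (by linarith) le_rfl) (hgood.movesLE_add hσ hΓσ hl hr hwΓ hwl hwε)
      (by linarith)).mono le_rfl ?_
    rw [div_le_iff₀ hl]
    nlinarith

theorem IsGoodRadius.isVirtuallyNilpotent_closure (hgood : IsGoodRadius Γ x r l) (hσ : IsGCB σ)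
    (hΓσ : ∀ g ∈ Γ, IsSigmaIsometry σ g) (hΓ : IsDiscreteSubgroup Γ) (hl : 0 < l) (hr : 0 ≤ r)
    (hrl : r + 2 * l ≤ 1) (hN : HasPackingBound X (2 * (l / 32)) (l / 32 / 2) N) (hc : 0 < c)
    (hcl : 1000 * c ≤ l) (hcN : 100000 * (N * c) ≤ l) :
    IsVirtuallyNilpotent ↥(Subgroup.closure {t | t ∈ Γ ∧ MovesLE t x 2 c}) := by
  set T : Set (X ≃ᵢ X) := {t | t ∈ Γ ∧ MovesLE t x 2 c}
  have hTinv : ∀ t ∈ T, t⁻¹ ∈ T := fun t ht => ⟨Γ.inv_mem ht.1, ht.2.inv⟩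
  have hnormal : ((ballFixator Γ x r).subgroupOf (Subgroup.closure T)).Normal :=
    normal_subgroupOf_closure hTinv fun t ht f hf => hgood.conj_mem_ballFixator hσ hΓσ hl ht.1
      (ht.2.mono (by linarith) (by linarith)) hf
  have hfinite := hΓ.finite_ballFixator x hr
  have : Finite ↥((ballFixator Γ x r).subgroupOf (Subgroup.closure T)) :=
    Finite.of_injective (fun f => (⟨f.1.1, f.2⟩ : ↥(ballFixator Γ x r))) fun a b h =>
      Subtype.ext (Subtype.ext (congrArg (fun f : ↥(ballFixator Γ x r) => f.1) h))
  obtain ⟨ε, hε, hmem⟩ := hΓ.exists_mem_ballFixator_of_movesLE x hr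
  obtain ⟨K, hK⟩ := exists_pow_lt_of_lt_one (div_pos hε hc) (by norm_num : (1 / 2 : ℝ) < 1)
  rw [lt_div_iff₀ hc] at hK
  refine isVirtuallyNilpotent_of_commutatorElement_mem Subgroup.closure_closure_coe_preimage
    ((ballFixator Γ x r).subgroupOf (Subgroup.closure T))
    (W := fun k => Subtype.val ⁻¹' almostFixing Γ x r l ((1 / 2) ^ k * c)) (K := K)
    (fun t ht => ⟨ht.1, ht.2.mono (by linarith) (by linarith),
      ht.2.mono (by linarith) (by simp)⟩) (fun k t ht w hw => ?_)
    fun w hw => hmem w hw.1 (hw.2.2.mono le_rfl hK.le)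
  have := hgood.commutatorElement_mem_almostFixing hσ hΓσ hΓ hl hr hrl hN hcl hcN ht.1 ht.2
    (mul_le_of_le_one_left hc.le (pow_le_one₀ (by norm_num) (by norm_num))) hw
  rwa [show (1 / 2 : ℝ) ^ k * c / 2 = (1 / 2) ^ (k + 1) * c by rw [pow_succ]; ring] at this

theorem exists_margulis_constant (P : ℝ) {r : ℝ} (hr : 0 < r) :
    ∃ c : ℝ, 0 < c ∧ ∀ (X : Type*) [MetricSpace X] (σ : X → X → ℝ → X), IsGCB σ →
      IsPacked X P r → ∀ Γ : Subgroup (X ≃ᵢ X), (∀ g ∈ Γ, IsSigmaIsometry σ g) →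
      IsDiscreteSubgroup Γ → ∀ x : X,
      IsVirtuallyNilpotent ↥(Subgroup.closure {t | t ∈ Γ ∧ MovesLE t x 2 c}) := by
  obtain ⟨N₁, hN₁⟩ := exists_hasPackingBound P hr 2 (by norm_num : (0 : ℝ) < 1 / 512)
  obtain ⟨N₂, hN₂⟩ := exists_hasPackingBound P hr (2 + 1) (by norm_num : (0 : ℝ) < 1 / 64)
  obtain ⟨l, hl, hNl⟩ : ∃ l : ℝ, 0 < l ∧ 2 * (N₂ * N₁ + 1) * l ≤ 1 :=
    ⟨1 / (2 * (N₂ * N₁ + 1)), by positivity, (mul_one_div_cancel (by positivity)).le⟩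
  obtain ⟨N, hN⟩ := exists_hasPackingBound P hr (2 * (l / 32))
    (by positivity : 0 < l / 32 / 2)
  refine ⟨l / (100000 * (N + 1)), by positivity, fun X _ σ hσ hP Γ hΓσ hΓ x => ?_⟩
  obtain ⟨ρ, hρ, hρl, hgood⟩ :=
    hσ.exists_isGoodRadius hΓσ (hN₁ X σ hσ hP) (hN₂ X σ hσ hP) x hl hNl
  have hc : l / (100000 * (N + 1)) * (100000 * (N + 1)) = l := div_mul_cancel₀ _ (by positivity)
  have hc0 : 0 < l / (100000 * (N + 1)) := by positivity
  have hNc : 0 ≤ N * (l / (100000 * (N + 1))) := by positivity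
  exact hgood.isVirtuallyNilpotent_closure hσ hΓσ hΓ hl hρ hρl (hN X σ hσ hP) hc0 (by linarith)
    (by linarith)

-- On a word ball that moves `x` a bounded amount, an element is determined up to the subgroup by
-- the approximate images of the points of a net of the ball of radius `R`.
theorem finiteIndex_closure_movesLE {N₁ N₂ : ℕ} {R C : ℝ} (hc : 0 < c)
    (h₁ : HasPackingBound X R (c / 4) N₁) (h₂ : HasPackingBound X (R + C) (c / 4) N₂)
    {S : Set ↥Γ} (hS : ∀ s ∈ S, s⁻¹ ∈ S) (hcl : Subgroup.closure S = ⊤)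
    (hC : ∀ g ∈ wordBall S ((N₂ + 1) ^ N₁), dist x (g.1 x) ≤ C) :
    ((Subgroup.closure {t | t ∈ Γ ∧ MovesLE t x R c}).subgroupOf Γ).FiniteIndex := by
  classical
  have : Nonempty X := ⟨x⟩
  obtain ⟨Z₁, hZ₁N, hZ₁, hnear₁⟩ := h₁.exists_net (by positivity) (subset_refl (closedBall x R))
  obtain ⟨Z₂, hZ₂N, -, hnear₂⟩ :=
    h₂.exists_net (by positivity) (subset_refl (closedBall x (R + C)))
  choose! f hfZ hf using hnear₂
  let E : Finset (↥Z₁ → X) := Fintype.piFinset fun _ => Z₂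
  have hE : E.card ≤ (N₂ + 1) ^ N₁ := by
    rw [Fintype.card_piFinset, Finset.prod_const, Finset.card_univ, Fintype.card_coe]
    exact (Nat.pow_le_pow_left (by omega) _).trans (Nat.pow_le_pow_right (by omega) hZ₁N)
  have hball : ∀ g ∈ wordBall S E.card, ∀ z ∈ Z₁, g.1 z ∈ closedBall x (R + C) := by
    intro g hg z hz
    have hzx : dist (g.1 z) (g.1 x) ≤ R := by
      rw [g.1.dist_eq]
      exact hZ₁ hz
    rw [mem_closedBall]
    linarith [dist_triangle_right (g.1 z) x (g.1 x), hC g (wordBall_mono S hE hg)]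
  refine finiteIndex_of_wordBall hS hcl _ E (fun g z => f (g.1 z.1))
    (fun g hg => Fintype.mem_piFinset.2 fun z => hfZ _ (hball g hg z.1 z.2))
    fun g hg h hh hgh => Subgroup.subset_closure ⟨(g⁻¹ * h).2, fun y hy => ?_⟩
  obtain ⟨z, hz, hyz⟩ := hnear₁ y hy
  have hgz := hf _ (hball g hg z hz)
  have hhz := hf _ (hball h hh z hz)
  have hfz : f (g.1 z) = f (h.1 z) := congrFun hgh ⟨z, hz⟩
  have htri := dist_triangle4 (g.1 y) (g.1 z) (h.1 z) (h.1 y)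
  rw [g.1.dist_eq, h.1.dist_eq, dist_comm z] at htri
  rw [← hfz] at hhz
  calc dist y ((g⁻¹ * h).1 y) = dist (g.1 y) (h.1 y) := dist_inv_mul_apply g h y
    _ ≤ c := by linarith [dist_triangle_right (g.1 z) (h.1 z) (f (g.1 z))]

theorem exists_wordBall_radius_isVirtuallyNilpotent (P : ℝ) {r : ℝ} (hr : 0 < r) (C : ℝ) :
    ∃ M : ℕ, ∀ (X : Type*) [MetricSpace X] (σ : X → X → ℝ → X), IsGCB σ →
      IsPacked X P r → ∀ Γ : Subgroup (X ≃ᵢ X), (∀ g ∈ Γ, IsSigmaIsometry σ g) →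
      IsDiscreteSubgroup Γ → ∀ (S : Set ↥Γ), (∀ s ∈ S, s⁻¹ ∈ S) → Subgroup.closure S = ⊤ →
      ∀ x : X, (∀ g ∈ wordBall S M, dist x (g.1 x) ≤ C) → IsVirtuallyNilpotent ↥Γ := by
  obtain ⟨c, hc, hmargulis⟩ := exists_margulis_constant P hr
  obtain ⟨N₁, hN₁⟩ := exists_hasPackingBound P hr 2 (by positivity : 0 < c / 4)
  obtain ⟨N₂, hN₂⟩ := exists_hasPackingBound P hr (2 + C) (by positivity : 0 < c / 4)
  refine ⟨(N₂ + 1) ^ N₁, fun X _ σ hσ hP Γ hΓσ hΓ S hS hcl x hC => ?_⟩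
  have := finiteIndex_closure_movesLE hc (hN₁ X σ hσ hP) (hN₂ X σ hσ hP) hS hcl hC
  refine IsVirtuallyNilpotent.of_finiteIndex
    (H := (Subgroup.closure {t | t ∈ Γ ∧ MovesLE t x 2 c}).subgroupOf Γ)
    ((hmargulis X σ hσ hP Γ hΓσ hΓ x).of_injective (Γ.subtype.subgroupComap _) fun a b h => ?_)
  exact Subtype.ext (Subtype.ext
    (congrArg (fun g : ↥(Subgroup.closure {t | t ∈ Γ ∧ MovesLE t x 2 c}) => g.1) h))

end MargulisLemma

section Hyperbolic

variable {X : Type*} [MetricSpace X] {δ κ κ₁ κ₂ : ℝ}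

theorem IsDeltaHyperbolic.nonneg (h : IsDeltaHyperbolic X δ) (x : X) : 0 ≤ δ := by
  simpa using h x x x x

theorem IsDeltaHyperbolic.dist_add_dist_le_or (h : IsDeltaHyperbolic X δ) (x y z w : X) :
    dist x y + dist z w ≤ dist x z + dist y w + 2 * δ ∨
      dist x y + dist z w ≤ dist x w + dist y z + 2 * δ := by
  simpa only [← sub_le_iff_le_add, le_max_iff] using h x y z w

/-- The point `y` lies between `x` and `z` up to the error `κ`: the Gromov product of `x` and `z`
based at `y` is at most `κ`. -/
abbrev AlmostBetween (κ : ℝ) (x y z : X) : Prop :=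
  dist x y + dist y z ≤ dist x z + 2 * κ

theorem AlmostBetween.symm {x y z : X} (h : AlmostBetween κ x y z) : AlmostBetween κ z y x := by
  rwa [AlmostBetween, add_comm, dist_comm y, dist_comm z, dist_comm z]

theorem AlmostBetween.map {x y z : X} (h : AlmostBetween κ x y z) (g : X ≃ᵢ X) :
    AlmostBetween κ (g x) (g y) (g z) := by
  simpa only [AlmostBetween, g.dist_eq] using h

theorem AlmostBetween.replace_right {x y z w : X} (hxyz : AlmostBetween κ x y z)
    (h : IsDeltaHyperbolic X δ) (hlt : dist z w + κ + δ < dist y z) :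
    AlmostBetween (κ + δ) x y w := by
  rcases h.dist_add_dist_le_or x z y w with h' | h'
  · linarith [dist_triangle_right y z w]
  · linarith [dist_comm y z]

theorem AlmostBetween.trans_right {x y z w : X} (h₁ : AlmostBetween κ₁ x y z)
    (h₂ : AlmostBetween κ₂ y z w) (h : IsDeltaHyperbolic X δ) (hlt : κ₁ + κ₂ + δ < dist y z) :
    AlmostBetween (κ₂ + δ) x z w := by
  rcases h.dist_add_dist_le_or x z y w with h' | h'
  · linarith
  · linarith [dist_comm y z]

theorem AlmostBetween.trans_left {x y z w : X} (h₁ : AlmostBetween κ₁ x y z)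
    (h₂ : AlmostBetween κ₂ y z w) (h : IsDeltaHyperbolic X δ) (hlt : κ₁ + κ₂ + δ < dist y z) :
    AlmostBetween (κ₁ + δ) x y w :=
  (h₂.symm.trans_right h₁.symm h (by rw [dist_comm]; linarith)).symm

/-- A sequence of points which, up to the error `K`, is monotone along a geodesic. -/
def IsQuasiLine (q : ℤ → X) (K : ℝ) : Prop :=
  ∀ i j k, i ≤ j → j ≤ k → AlmostBetween K (q i) (q j) (q k)

theorem IsQuasiLine.comp_neg {q : ℤ → X} {K : ℝ} (h : IsQuasiLine q K) :
    IsQuasiLine (fun i => q (-i)) K := fun i j k hij hjk =>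
  (h (-k) (-j) (-i) (neg_le_neg hjk) (neg_le_neg hij)).symm

theorem IsQuasiLine.map {q : ℤ → X} {K : ℝ} (h : IsQuasiLine q K) (g : X ≃ᵢ X) :
    IsQuasiLine (fun i => g (q i)) K := fun i j k hij hjk => (h i j k hij hjk).map g

theorem IsQuasiLine.nonneg {q : ℤ → X} {K : ℝ} (h : IsQuasiLine q K) : 0 ≤ K := by
  simpa [AlmostBetween] using h 0 0 0 le_rfl le_rfl

theorem IsQuasiLine.mul_le_dist {q : ℤ → X} {K l : ℝ} (h : IsQuasiLine q K)
    (hl : ∀ i, l ≤ dist (q i) (q (i + 1))) (i : ℤ) (n : ℕ) :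
    n * (l - 2 * K) ≤ dist (q i) (q (i + n)) := by
  induction n with
  | zero => simp
  | succ n ih =>
    have hbetween := h i (i + n) (i + n + 1) (by lia) (by lia)
    push_cast
    rw [← add_assoc]
    linarith [hl (i + n)]

theorem IsDeltaHyperbolic.almostBetween_succ (h : IsDeltaHyperbolic X δ) {q : ℤ → X}
    (hloc : ∀ i, AlmostBetween κ (q (i - 1)) (q i) (q (i + 1)))
    (hstep : ∀ i, 2 * κ + 2 * δ < dist (q i) (q (i + 1))) {i j : ℤ} (hij : i ≤ j) :
    AlmostBetween (κ + δ) (q i) (q j) (q (j + 1)) := by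
  induction j, hij using Int.leInduction with
  | base =>
    have hκ : 0 ≤ κ := by
      linarith [hloc i, dist_triangle (q (i - 1)) (q i) (q (i + 1))]
    rw [AlmostBetween, dist_self]
    linarith [h.nonneg (q i)]
  | succ j _ ih =>
    exact ih.trans_right (by simpa using hloc (j + 1)) h (by linarith [hstep j])

theorem IsDeltaHyperbolic.isQuasiLine (h : IsDeltaHyperbolic X δ) {q : ℤ → X}
    (hloc : ∀ i, AlmostBetween κ (q (i - 1)) (q i) (q (i + 1)))
    (hstep : ∀ i, 2 * κ + 3 * δ < dist (q i) (q (i + 1))) :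
    IsQuasiLine q (κ + 2 * δ) := by
  have hδ := h.nonneg (q 0)
  intro i j k hij hjk
  rcases hjk.eq_or_lt with rfl | hjk
  · have hκ : 0 ≤ κ := by
      linarith [hloc i, dist_triangle (q (i - 1)) (q i) (q (i + 1))]
    rw [AlmostBetween, dist_self]
    linarith
  have hleft := h.almostBetween_succ hloc (fun i => by linarith [hstep i]) hij
  have hright := h.almostBetween_succ (q := fun i => q (-i)) (i := -k) (j := -(j + 1))
    (fun i => by simpa only [neg_sub', neg_add', sub_neg_eq_add] using (hloc (-i)).symm)
    (fun i => by
      have := hstep (-(i + 1))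
      rw [neg_add', sub_add_cancel, dist_comm] at this
      rw [neg_add']
      linarith)
    (by lia)
  simp only [neg_neg, neg_add_rev, neg_add_cancel_comm] at hright
  have := hleft.trans_left hright.symm h (by linarith [hstep j])
  linarith

theorem IsDeltaHyperbolic.exists_dist_le_of_almostBetween (h : IsDeltaHyperbolic X δ)
    {K K' l : ℝ} {p : ℤ → X} (hp : IsQuasiLine p K) (hl : ∀ i, dist (p i) (p (i + 1)) ≤ l)
    {i k : ℤ} {y : X} (hy : AlmostBetween K' (p i) y (p k)) :
    ∃ j, dist y (p j) ≤ K' + 2 * K + 2 * δ + l := by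
  wlog hik : i ≤ k generalizing i k
  · exact this hy.symm (le_of_not_ge hik)
  have hδ := h.nonneg y
  have hl0 : 0 ≤ l := dist_nonneg.trans (hl 0)
  have hK := hp.nonneg
  by_contra! hfar
  have hbetween : ∀ j, i ≤ j → j ≤ k → AlmostBetween (K + δ) (p i) (p j) y := by
    intro j hij
    induction j, hij using Int.leInduction with
    | base =>
      intro _
      rw [AlmostBetween, dist_self]
      linarith
    | succ j hij ih =>
      intro hjk
      have hj := ih (by lia)
      have hjk' := hp i (j + 1) k (by lia) hjk
      rcases h.dist_add_dist_le_or (p i) (p k) (p (j + 1)) y with h' | h'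
      · linarith [hfar j, hl j, dist_triangle (p i) (p j) (p (j + 1)), dist_comm (p j) y,
          dist_triangle_right (p j) y (p (j + 1)), dist_comm y (p k)]
      · linarith [dist_comm (p k) (p (j + 1))]
  have := hbetween k hik le_rfl
  linarith [hfar k, dist_comm (p k) y]

end Hyperbolic

section Transverse

variable {X : Type*} [MetricSpace X] {δ κ : ℝ} {x : X}

-- Otherwise all elements of `U` of almost maximal displacement start in the same direction, and
-- moving `x` a little in that direction decreases the maximal displacement.
theorem IsDeltaHyperbolic.exists_almostBetween_inv (h : IsDeltaHyperbolic X δ)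
    (hX : IsGeodesicSpace X) {U : Set (X ≃ᵢ X)} (hU : ∀ u ∈ U, u⁻¹ ∈ U) {L : ℝ}
    (hL : 12 * δ ≤ L) (hmin : ∀ y, ∃ u ∈ U, L ≤ dist y (u y))
    (hx : ∀ u ∈ U, dist x (u x) < L + δ) :
    ∃ u ∈ U, ∃ v ∈ U, L - 12 * δ ≤ dist x (u x) ∧ L - 12 * δ ≤ dist x (v x) ∧
      AlmostBetween (4 * δ) (u⁻¹ x) x (v x) := by
  by_contra! hcon
  obtain ⟨u₀, hu₀, hLu₀⟩ := hmin x
  have hδ : 0 < δ := by linarith [hx u₀ hu₀]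
  obtain ⟨x', hxx', hx'u₀⟩ := hX.exists_dist_eq x (u₀ x) (R := 4 * δ) (by linarith) (by linarith)
  have hclose : ∀ u ∈ U, L - 12 * δ ≤ dist x (u x) →
      dist x' (u x) ≤ dist x (u x) - 2 * δ := by
    intro u hu hLu
    have hu' := hcon u⁻¹ (hU u hu) u₀ hu₀ (by rwa [dist_self_inv]) (by linarith)
    rw [inv_inv] at hu'
    rcases h.dist_add_dist_le_or x' (u x) x (u₀ x) with h' | h' <;>
      linarith [dist_comm x' x, dist_comm (u x) x]
  obtain ⟨u, hu, hLu⟩ := hmin x'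
  have hxu' := u.dist_eq x x'
  by_cases hbig : L - 12 * δ ≤ dist x (u x)
  · have hu_near := hclose u hu hbig
    have hu'_near := hclose u⁻¹ (hU u hu) (by rwa [dist_self_inv])
    rw [dist_self_inv, ← dist_apply_left] at hu'_near
    rcases h.dist_add_dist_le_or x' (u x') x (u x) with h' | h' <;>
      linarith [dist_comm x' x, hx u hu, dist_comm (u x') (u x), dist_comm x (u x')]
  · linarith [dist_triangle4 x' x (u x) (u x'), dist_comm x' x, hx u hu]

theorem IsDeltaHyperbolic.exists_almostBetween_inv_inv (h : IsDeltaHyperbolic X δ)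
    (hX : IsGeodesicSpace X) {U : Set (X ≃ᵢ X)} (hU : ∀ u ∈ U, u⁻¹ ∈ U) {L : ℝ}
    (hL : 12 * δ ≤ L) (hmin : ∀ y, ∃ u ∈ U, L ≤ dist y (u y))
    (hx : ∀ u ∈ U, dist x (u x) < L + δ) :
    ∃ u ∈ U, ∃ v ∈ U, L - 12 * δ ≤ dist x (u x) ∧ L - 12 * δ ≤ dist x (v x) ∧
      AlmostBetween (6 * δ) (u⁻¹ x) x (v x) ∧ AlmostBetween (6 * δ) (v⁻¹ x) x (u x) := by
  have hδ := h.nonneg x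
  obtain ⟨u, hu, v, hv, hLu, hLv, huv⟩ :=
    h.exists_almostBetween_inv hX hU hL hmin hx
  by_cases hvu : AlmostBetween (6 * δ) (v⁻¹ x) x (u x)
  · exact ⟨u, hu, v, hv, hLu, hLv, by linarith, hvu⟩
  by_cases huu : AlmostBetween (6 * δ) (u⁻¹ x) x (u x)
  · exact ⟨u, hu, u, hu, hLu, hLu, huu, huu⟩
  by_cases hvv : AlmostBetween (6 * δ) (v⁻¹ x) x (v x)
  · exact ⟨v, hv, v, hv, hLv, hLv, hvv, hvv⟩
  exfalso
  simp only [AlmostBetween, not_le, dist_comm _ x, dist_self_inv] at huv hvu huu hvv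
  have h₁ := h.dist_add_dist_le_or (u⁻¹ x) (v x) x (v⁻¹ x)
  have h₂ := h.dist_add_dist_le_or (u⁻¹ x) (v⁻¹ x) x (u x)
  simp only [dist_comm _ x, dist_self_inv, dist_comm (v x) (v⁻¹ x)] at h₁ h₂
  rcases h₁ with h₁ | h₁ <;> rcases h₂ with h₂ | h₂ <;> linarith

theorem AlmostBetween.mul (h : IsDeltaHyperbolic X δ) {u v : X ≃ᵢ X}
    (huv : AlmostBetween κ (u⁻¹ x) x (v x)) (hvu : AlmostBetween κ (v⁻¹ x) x (u x))
    (hu : 2 * κ + 2 * δ < dist x (u x)) (hv : 2 * κ + 2 * δ < dist x (v x)) :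
    AlmostBetween (κ + 2 * δ) ((u * v)⁻¹ x) x ((u * v) x) := by
  have hδ := h.nonneg x
  have hleft : AlmostBetween κ ((u * v)⁻¹ x) (v⁻¹ x) x := by
    simpa only [mul_inv_rev, IsometryEquiv.mul_apply, IsometryEquiv.inv_apply_self]
      using huv.map v⁻¹
  have hright : AlmostBetween κ x (u x) ((u * v) x) := by
    simpa only [IsometryEquiv.mul_apply, IsometryEquiv.apply_inv_self] using huv.map u
  have := (hleft.trans_right hvu h (by rw [dist_comm, dist_self_inv]; linarith)).trans_left
    hright h (by linarith)
  linarith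

theorem IsDeltaHyperbolic.isQuasiLine_zpow (h : IsDeltaHyperbolic X δ) {g : X ≃ᵢ X}
    (hg : AlmostBetween κ (g⁻¹ x) x (g x)) (hlt : 2 * κ + 3 * δ < dist x (g x)) :
    IsQuasiLine (fun i : ℤ => (g ^ i) x) (κ + 2 * δ) := by
  refine h.isQuasiLine (fun i => ?_) fun i => ?_
  · simpa only [← IsometryEquiv.mul_apply, ← zpow_sub_one, ← zpow_add_one] using hg.map (g ^ i)
  · rwa [zpow_add_one, IsometryEquiv.mul_apply, IsometryEquiv.dist_eq]

end Transverse

section Schottky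

variable {X : Type*} [MetricSpace X] {δ A : ℝ} {o : X}

theorem IsDeltaHyperbolic.dist_add_le_dist_of_dist_add_le (h : IsDeltaHyperbolic X δ)
    (hA : 2 * δ < A) {x y z w : X} (hxy : dist x y + (A - 2 * δ) ≤ dist x z)
    (hyw : dist y z + A ≤ dist y w) (hzw : dist z w + A ≤ dist y w) :
    dist x z + (A - 2 * δ) ≤ dist x w := by
  rcases h.dist_add_dist_le_or x z y w with h' | h'
  · linarith
  · linarith [dist_comm z y]

/-- A family of isometries moving `o` in quantitatively different directions, which are also
different from the directions in which their inverses move it. No two of the inverses are compared,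
so that only positive words in the family are controlled. -/
structure IsSchottkyFamily {ι : Type*} (c : ι → X ≃ᵢ X) (o : X) (A : ℝ) : Prop where
  inv_left : ∀ i j, dist o (c i o) + A ≤ dist ((c i)⁻¹ o) (c j o)
  inv_right : ∀ i j, dist o (c j o) + A ≤ dist ((c i)⁻¹ o) (c j o)
  ne : ∀ i j, i ≠ j → dist o (c i o) + A ≤ dist (c i o) (c j o)

namespace IsSchottkyFamily

variable {ι : Type*} {c : ι → X ≃ᵢ X}

theorem dist_add_le_dist_prod (hT : IsSchottkyFamily c o A) (h : IsDeltaHyperbolic X δ)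
    (hA : 2 * δ < A) (L : List ι) {i : ι} {y : X} (hiy : dist o (c i o) + A ≤ dist (c i o) y)
    (hoy : dist o y + A ≤ dist (c i o) y) :
    dist ((c i * (L.map c).prod) o) o + (A - 2 * δ) ≤ dist ((c i * (L.map c).prod) o) y := by
  induction L generalizing i y with
  | nil =>
    rw [List.map_nil, List.prod_nil, mul_one, dist_comm]
    linarith [h.nonneg o]
  | cons j L ih =>
    have hj := ih (i := j) (y := (c i)⁻¹ o) (by rw [dist_comm (c j o)]; exact hT.inv_right i j)
      (by rw [dist_self_inv, dist_comm (c j o)]; exact hT.inv_left i j)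
    rw [List.map_cons, List.prod_cons, IsometryEquiv.mul_apply]
    refine h.dist_add_le_dist_of_dist_add_le hA (y := c i o) ?_ (by rwa [dist_comm _ o]) hoy
    rwa [(c i).dist_eq, dist_apply_left (c i)]

theorem dist_add_le_dist_mul_prod (hT : IsSchottkyFamily c o A) (h : IsDeltaHyperbolic X δ)
    (hA : 2 * δ < A) (z : X) (L : List ι) {g : X ≃ᵢ X} {i : ι}
    (hgi : dist z (g o) + (A - 2 * δ) ≤ dist z ((g * c i) o)) :
    dist z (g o) + (A - 2 * δ) ≤ dist z ((g * (c i * (L.map c).prod)) o) := by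
  induction L generalizing g i with
  | nil => rwa [List.map_nil, List.prod_nil, mul_one]
  | cons j L ih =>
    have hij : dist (g o) ((g * c i * c j) o) = dist ((c i)⁻¹ o) (c j o) := by
      rw [dist_apply_left (c i)⁻¹, inv_inv]
      exact g.dist_eq o (c i (c j o))
    have hi : dist (g o) ((g * c i) o) = dist o (c i o) := g.dist_eq _ _
    have hj : dist ((g * c i) o) ((g * c i * c j) o) = dist o (c j o) := (g * c i).dist_eq _ _
    have hgij := h.dist_add_le_dist_of_dist_add_le hA hgi (w := (g * c i * c j) o)
      (by rw [hi, hij]; exact hT.inv_left i j) (by rw [hj, hij]; exact hT.inv_right i j)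
    rw [List.map_cons, List.prod_cons, ← mul_assoc]
    linarith [ih hgij]

-- If the first letters `i` and `j` of two words differ, then the second word starts from `o` in a
-- direction away from the end point of the first word, and keeps moving away from it.
theorem prod_ne_prod (hT : IsSchottkyFamily c o A) (h : IsDeltaHyperbolic X δ) (hA : 2 * δ < A)
    {i j : ι} (hij : i ≠ j) (L L' : List ι) :
    c i * (L.map c).prod ≠ c j * (L'.map c).prod := fun heq => by
  have hback := hT.dist_add_le_dist_prod h hA L (hT.ne i j hij)
    (by rw [dist_comm (c i o)]; exact hT.ne j i hij.symm)
  have hforward := hT.dist_add_le_dist_mul_prod h hA ((c i * (L.map c).prod) o) L' (g := 1)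
    (i := j) (by rwa [one_mul])
  rw [one_mul, ← heq, dist_self] at hforward
  linarith [dist_nonneg (x := (c i * (L.map c).prod) o) (y := (1 : X ≃ᵢ X) o)]

theorem eq_of_prod_eq_prod (hT : IsSchottkyFamily c o A) (h : IsDeltaHyperbolic X δ)
    (hA : 2 * δ < A) {L L' : List ι} (hlength : L.length = L'.length)
    (hprod : (L.map c).prod = (L'.map c).prod) : L = L' := by
  induction L generalizing L' with
  | nil => exact (List.length_eq_zero_iff.1 hlength.symm).symm
  | cons i L ih =>
    cases L' with
    | nil => cases hlength
    | cons j L' =>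
      rw [List.map_cons, List.map_cons, List.prod_cons, List.prod_cons] at hprod
      obtain rfl : i = j := by
        by_contra hij
        exact hT.prod_ne_prod h hA hij L L' hprod
      rw [ih (Nat.succ.inj hlength) (mul_left_cancel hprod)]

theorem card_pow_le_ncard_wordBall [Fintype ι] (hT : IsSchottkyFamily c o A)
    (h : IsDeltaHyperbolic X δ) (hA : 2 * δ < A) {Γ : Subgroup (X ≃ᵢ X)} {S : Set ↥Γ} {m : ℕ}
    (hc : ∀ i, c i ∈ Subtype.val '' wordBall S m) {n : ℕ} (hfin : (wordBall S (n * m)).Finite) :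
    Fintype.card ι ^ n ≤ (wordBall S (n * m)).ncard := by
  choose c' hc' hcc' using hc
  obtain rfl : Γ.subtype ∘ c' = c := funext hcc'
  have hinj : Function.Injective fun L : List.Vector ι n => (L.1.map c').prod := fun L L' hLL' =>
    Subtype.ext (hT.eq_of_prod_eq_prod h hA (L.2.trans L'.2.symm) (by
      simpa only [List.map_map, map_list_prod] using congrArg Γ.subtype hLL'))
  rw [← card_vector, ← Nat.card_eq_fintype_card, ← Set.ncard_univ,
    ← Set.ncard_image_of_injective _ hinj]
  refine Set.ncard_le_ncard ?_ hfin
  rintro _ ⟨⟨L, rfl⟩, -, rfl⟩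
  exact prod_map_mem_wordBall hc' L

end IsSchottkyFamily

end Schottky

section NearTranslate

variable {X : Type*} [MetricSpace X] {δ K l : ℝ} {q : ℤ → X}

/-- Every point of the sequence `q` is at distance at most `R` from the translate of `q` by `s`. -/
def NearTranslate (q : ℤ → X) (s : X ≃ᵢ X) (R : ℝ) : Prop :=
  ∀ k, ∃ j, dist (q k) (s (q j)) ≤ R

-- The constant `2 * l` does not deteriorate to `4 * l`: far away points of `q` are `4 * l`-close to
-- the translated quasi-line, so that the points between them are much closer to it.
theorem NearTranslate.mul {s t : X ≃ᵢ X} (hs : NearTranslate q s (2 * l))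
    (ht : NearTranslate q t (2 * l)) (h : IsDeltaHyperbolic X δ) (hq : IsQuasiLine q K)
    (hl : ∀ i, dist (q i) (q (i + 1)) = l) (hl₀ : 0 < l) (hKl : 100 * (K + δ) ≤ l) :
    NearTranslate q (s * t) (2 * l) := by
  have hδ := h.nonneg (q 0)
  have hK := hq.nonneg
  have hnear : ∀ k, ∃ j, dist (q k) ((s * t) (q j)) ≤ 4 * l := by
    intro k
    obtain ⟨i, hi⟩ := hs k
    obtain ⟨j, hj⟩ := ht i
    have hst : dist (s (q i)) ((s * t) (q j)) = dist (q i) (t (q j)) := s.dist_eq _ _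
    exact ⟨j, by linarith [dist_triangle (q k) (s (q i)) ((s * t) (q j))]⟩
  intro k
  obtain ⟨j₁, hj₁⟩ := hnear (k - 5)
  obtain ⟨j₂, hj₂⟩ := hnear (k + 5)
  have hlong := hq.mul_le_dist (fun i => (hl i).ge)
  have hleft := hlong (k - 5) 5
  have hright := hlong k 5
  norm_num at hleft hright
  have hbetween : AlmostBetween (K + δ + δ) ((s * t) (q j₂)) (q k) ((s * t) (q j₁)) :=
    ((hq (k - 5) k (k + 5) (by lia) (by lia)).replace_right h (by linarith)).symm.replace_right h
      (by linarith [dist_comm (q k) (q (k - 5))])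
  obtain ⟨j, hj⟩ := h.exists_dist_le_of_almostBetween (hq.map (s * t))
    (fun i => by rw [(s * t).dist_eq, hl]) hbetween
  exact ⟨j, by linarith⟩

theorem IsDiscreteSubgroup.isVirtuallyNilpotent_of_forall_exists_zpow {Γ : Subgroup (X ≃ᵢ X)}
    (hΓ : IsDiscreteSubgroup Γ) (g : ↥Γ) {x : X} {R : ℝ}
    (h : ∀ γ : ↥Γ, ∃ j : ℤ, dist x ((γ * g ^ j).1 x) ≤ R) : IsVirtuallyNilpotent ↥Γ := by
  refine ⟨Subgroup.zpowers g, ?_, ?_⟩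
  · have := (hΓ.finite_dist_le x R).to_subtype
    have : Finite (↥Γ ⧸ Subgroup.zpowers g) := by
      refine Finite.of_surjective
        (fun γ : {γ : ↥Γ | dist x (γ.1 x) ≤ R} => (γ.1 : ↥Γ ⧸ Subgroup.zpowers g)) fun c => ?_
      obtain ⟨γ, rfl⟩ := QuotientGroup.mk_surjective c
      obtain ⟨j, hj⟩ := h γ
      exact ⟨⟨γ * g ^ j, hj⟩, QuotientGroup.mk_mul_of_mem γ (Subgroup.zpow_mem_zpowers g j)⟩
    exact Subgroup.finiteIndex_of_finite_quotient
  · let _ : CommGroup ↥(Subgroup.zpowers g) := IsCyclic.commGroup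
    exact CommGroup.isNilpotent

-- Otherwise `q (k + 1)` would be almost between two points of `p`, hence close to `p`.
theorem IsDeltaHyperbolic.almostBetween_of_lt_dist (h : IsDeltaHyperbolic X δ) {p : ℤ → X}
    (hq : IsQuasiLine q K) (hp : IsQuasiLine p K) (hql : ∀ i, dist (q i) (q (i + 1)) ≤ l)
    (hpl : ∀ i, dist (p i) (p (i + 1)) ≤ l) (hKl : 100 * (K + δ) ≤ l)
    (hqp : 5 * dist (q 0) (p 0) ≤ 3 * l) {k n : ℤ} (hk : 0 ≤ k) (hn : k < n)
    (hfar : ∀ j, 2 * l < dist (q (k + 1)) (p j)) (j : ℤ) :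
    AlmostBetween (17 / 10 * l) (q n) (q k) (p j) := by
  by_contra! hcon
  have hδ := h.nonneg (q 0)
  have hK := hq.nonneg
  have hqk := hql k
  have hline := hq 0 (k + 1) n (by lia) (by lia)
  have hn' := dist_triangle (q k) (q (k + 1)) (q n)
  have hj' := dist_triangle (q k) (q (k + 1)) (p j)
  have hp₀ := dist_triangle_left (p 0) (q (k + 1)) (q 0)
  have hp₀n := dist_triangle (q 0) (p 0) (q n)
  have hbetween : AlmostBetween (3 / 5 * l + K + δ) (p 0) (q (k + 1)) (p j) := by
    rcases h.dist_add_dist_le_or (p 0) (q n) (q (k + 1)) (p j) with h' | h' <;>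
      linarith [dist_comm (q n) (q (k + 1)), dist_comm (q n) (q k)]
  obtain ⟨i, hi⟩ := h.exists_dist_le_of_almostBetween hp hpl hbetween
  linarith [hfar i]

end NearTranslate

section SchottkyPair

variable {X : Type*} [MetricSpace X] {δ A D : ℝ} {a b : X ≃ᵢ X} {o : X}

theorem isSchottkyFamily_pair (ha : dist o (a o) + A ≤ D) (hb : dist o (b o) + A ≤ D)
    (haa : D ≤ dist (a⁻¹ o) (a o)) (hbb : D ≤ dist (b⁻¹ o) (b o)) (hab : D ≤ dist (a⁻¹ o) (b o))
    (hba : D ≤ dist (b⁻¹ o) (a o)) (hne : D ≤ dist (a o) (b o)) :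
    IsSchottkyFamily ![a, b] o A := by
  refine ⟨?_, ?_, ?_⟩ <;>
    simp only [Fin.forall_fin_two, Matrix.cons_val_zero, Matrix.cons_val_one, ne_eq,
      not_true_eq_false, IsEmpty.forall_iff, true_and, and_true]
  · exact ⟨⟨by linarith, by linarith⟩, by linarith, by linarith⟩
  · exact ⟨⟨by linarith, by linarith⟩, by linarith, by linarith⟩
  · exact ⟨fun _ => by linarith, fun _ => by linarith [dist_comm (a o) (b o)]⟩

-- The directions of `b o` and `b⁻¹ o` are different, so that one of them differs from `a⁻¹ o`.
theorem IsDeltaHyperbolic.isSchottkyFamily_pair_or (h : IsDeltaHyperbolic X δ)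
    (ha : dist o (a o) + A ≤ D) (hb : dist o (b o) + A ≤ D) (haa : D ≤ dist (a⁻¹ o) (a o))
    (hbb : D ≤ dist (b⁻¹ o) (b o))
    (hbb' : D + dist o (b o) + 2 * δ ≤ dist (b⁻¹ o) (b o) + dist o (a o))
    (hab : D ≤ dist (a o) (b o)) (hab' : D ≤ dist (a o) (b⁻¹ o)) :
    IsSchottkyFamily ![a, b] o A ∨ IsSchottkyFamily ![a, b⁻¹] o A := by
  rcases h.dist_add_dist_le_or (b⁻¹ o) (b o) o (a⁻¹ o) with h' | h' <;>
    simp only [dist_comm _ o, dist_self_inv] at h'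
  · exact .inl (isSchottkyFamily_pair ha hb haa hbb (by linarith [dist_comm (b o) (a⁻¹ o)])
      (by rwa [dist_comm]) hab)
  · refine .inr (isSchottkyFamily_pair ha (by rwa [dist_self_inv]) haa ?_ ?_ ?_ hab')
    · rwa [inv_inv, dist_comm]
    · linarith [dist_comm (b⁻¹ o) (a⁻¹ o)]
    · rwa [inv_inv, dist_comm]

theorem IsDeltaHyperbolic.isSchottkyFamily_pair_or_of_almostBetween (h : IsDeltaHyperbolic X δ)
    {κ l L : ℝ} {y : X} (hκl : κ + δ ≤ 2 * l) (hlL : 17 * l ≤ L) (hoy : dist o y ≤ 2 * l)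
    (ha : dist o (a o) = L) (hb : dist y (b y) = L)
    (haa : AlmostBetween κ (a⁻¹ o) o (a o)) (hbb : AlmostBetween κ (b⁻¹ y) y (b y))
    (hab : AlmostBetween κ (a o) o (b y)) (hab' : AlmostBetween κ (a o) o (b⁻¹ y)) :
    IsSchottkyFamily ![a, b] o l ∨ IsSchottkyFamily ![a, b⁻¹] o l := by
  have hδ := h.nonneg o
  have hl : 0 ≤ l := by linarith [dist_nonneg (x := o) (y := y)]
  have hb' := dist_self_inv b y
  have hbo := b.dist_eq o y
  have hbo' := b⁻¹.dist_eq o y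
  have hoby := dist_triangle_right y (b y) o
  have hoby' := dist_triangle_right y (b⁻¹ y) o
  have hbb_ge : 2 * L - 2 * κ - 4 * l ≤ dist (b⁻¹ o) (b o) := by
    linarith [dist_triangle4 (b⁻¹ y) (b⁻¹ o) (b o) (b y), dist_comm (b⁻¹ o) (b⁻¹ y),
      dist_comm y (b⁻¹ y)]
  refine h.isSchottkyFamily_pair_or (D := 2 * L - 12 * l) ?_ ?_ ?_ ?_ ?_ ?_ ?_
  · linarith
  · linarith [dist_triangle4 o y (b y) (b o), dist_comm (b y) (b o)]
  · linarith [dist_comm o (a⁻¹ o), dist_self_inv a o]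
  · linarith
  · linarith [dist_triangle4 o y (b y) (b o), dist_comm (b y) (b o)]
  · linarith [dist_triangle_right (a o) (b y) (b o), dist_comm (b y) (b o), dist_comm (a o) o,
      dist_comm y o, dist_comm (b y) o]
  · linarith [dist_triangle_right (a o) (b⁻¹ y) (b⁻¹ o), dist_comm (b⁻¹ y) (b⁻¹ o),
      dist_comm (a o) o, dist_comm y o, dist_comm (b⁻¹ y) o]

end SchottkyPair

section ConjugatePowers

variable {X : Type*} [MetricSpace X] {δ K l : ℝ} {g s : X ≃ᵢ X} {x : X}

theorem pow_apply_zpow_apply (g : X ≃ᵢ X) (n : ℕ) (i : ℤ) (x : X) :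
    (g ^ n) ((g ^ i) x) = (g ^ (i + n)) x := by
  rw [← IsometryEquiv.mul_apply, ← zpow_natCast, ← zpow_add, add_comm]

theorem inv_pow_apply_zpow_apply (g : X ≃ᵢ X) (n : ℕ) (i : ℤ) (x : X) :
    (g ^ n)⁻¹ ((g ^ i) x) = (g ^ (i - n)) x := by
  rw [← IsometryEquiv.mul_apply, ← zpow_natCast, ← zpow_neg, ← zpow_add, neg_add_eq_sub]

theorem dist_zpow_apply_pow_apply (g : X ≃ᵢ X) (n : ℕ) (i : ℤ) (x : X) :
    dist ((g ^ i) x) ((g ^ n) ((g ^ i) x)) = dist x ((g ^ n) x) := by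
  rw [pow_apply_zpow_apply, zpow_add, zpow_natCast, IsometryEquiv.mul_apply,
    IsometryEquiv.dist_eq]

theorem IsQuasiLine.almostBetween_pow (hq : IsQuasiLine (fun i : ℤ => (g ^ i) x) K) (n : ℕ)
    (i : ℤ) : AlmostBetween K ((g ^ n)⁻¹ ((g ^ i) x)) ((g ^ i) x) ((g ^ n) ((g ^ i) x)) := by
  rw [pow_apply_zpow_apply, inv_pow_apply_zpow_apply]
  exact hq (i - n) i (i + n) (by lia) (by lia)

theorem IsDeltaHyperbolic.isSchottkyFamily_conj_pow_or (h : IsDeltaHyperbolic X δ)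
    (hq : IsQuasiLine (fun i : ℤ => (g ^ i) x) K) (hl : dist x (g x) = l)
    (hKl : 100 * (K + δ) ≤ l) (hs : 5 * dist x (s x) ≤ 3 * l) {N : ℕ} (hN : 0 < N)
    (hlN : 17 * l ≤ dist x ((g ^ N) x)) {k j : ℤ} (hk : 0 ≤ k)
    (hnear : dist ((g ^ k) x) (s ((g ^ j) x)) ≤ 2 * l)
    (hfar : ∀ i : ℤ, 2 * l < dist ((g ^ (k + 1)) x) (s ((g ^ i) x))) :
    IsSchottkyFamily ![g ^ N, s * g ^ N * s⁻¹] ((g ^ k) x) l ∨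
      IsSchottkyFamily ![g ^ N, (s * g ^ N * s⁻¹)⁻¹] ((g ^ k) x) l := by
  have hδ := h.nonneg x
  have hK := hq.nonneg
  have hstep : ∀ i : ℤ, dist ((g ^ i) x) ((g ^ (i + 1)) x) = l := fun i => by
    rw [zpow_add_one, IsometryEquiv.mul_apply, IsometryEquiv.dist_eq, hl]
  have hdiverge := h.almostBetween_of_lt_dist hq (hq.map s) (fun i => (hstep i).le)
    (fun i => by rw [s.dist_eq, hstep]) hKl (by simpa using hs) hk
    (show k < k + N by lia) hfar
  have hconj : ∀ y, (s * g ^ N * s⁻¹) (s y) = s ((g ^ N) y) := fun y => by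
    simp only [IsometryEquiv.mul_apply, IsometryEquiv.inv_apply_self]
  have hconj_inv : ∀ y, (s * g ^ N * s⁻¹)⁻¹ (s y) = s ((g ^ N)⁻¹ y) := fun y => by
    simp only [mul_inv_rev, inv_inv, IsometryEquiv.mul_apply, IsometryEquiv.inv_apply_self]
  refine h.isSchottkyFamily_pair_or_of_almostBetween (κ := 17 / 10 * l) (by linarith) hlN hnear
    (dist_zpow_apply_pow_apply g N k x) ?_ ?_ ?_ ?_ ?_
  · rw [hconj, s.dist_eq, dist_zpow_apply_pow_apply]
  · linarith [hq.almostBetween_pow N k]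
  · rw [hconj, hconj_inv]
    linarith [(hq.almostBetween_pow N j).map s]
  · rw [hconj, pow_apply_zpow_apply, pow_apply_zpow_apply]
    exact hdiverge _
  · rw [hconj_inv, pow_apply_zpow_apply, inv_pow_apply_zpow_apply]
    exact hdiverge _

theorem IsDeltaHyperbolic.exists_isSchottkyFamily_of_lt_dist_pow (h : IsDeltaHyperbolic X δ)
    (hq : IsQuasiLine (fun i : ℤ => (g ^ i) x) K) (hl : dist x (g x) = l) (hl₀ : 0 < l)
    (hKl : 100 * (K + δ) ≤ l) (hs : 5 * dist x (s x) ≤ 3 * l) {n : ℕ}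
    (hfar : ∀ j : ℤ, 2 * l < dist ((g ^ n) x) (s ((g ^ j) x))) :
    ∃ b, (b = g ∨ b = g⁻¹) ∧ ∃ o, IsSchottkyFamily ![g ^ 20, s * b ^ 20 * s⁻¹] o l := by
  have hlN : 17 * l ≤ dist x ((g ^ 20) x) := by
    have := hq.mul_le_dist (l := l) (fun i => by
      rw [zpow_add_one, IsometryEquiv.mul_apply, IsometryEquiv.dist_eq, hl]) 0 20
    norm_num at this
    have : (g ^ (20 : ℤ)) = g ^ 20 := zpow_natCast g 20
    linarith [h.nonneg x]
  obtain ⟨k, hk, hk'⟩ := Nat.exists_not_and_succ_of_not_zero_of_exists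
    (p := fun n : ℕ => ∀ j : ℤ, 2 * l < dist ((g ^ n) x) (s ((g ^ j) x)))
    (fun h₀ => by
      have := h₀ 0
      simp only [pow_zero, zpow_zero, IsometryEquiv.coe_one, id_eq] at this
      linarith) ⟨n, hfar⟩
  push Not at hk
  obtain ⟨j, hj⟩ := hk
  rcases h.isSchottkyFamily_conj_pow_or hq hl hKl hs (N := 20) (by simp) hlN (k := k) (j := j)
    (by lia) (by simpa using hj) (by exact_mod_cast hk') with hT | hT
  · exact ⟨g, .inl rfl, _, hT⟩
  · exact ⟨g⁻¹, .inr rfl, _, by simpa only [conj_inv, inv_pow] using hT⟩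

theorem IsDeltaHyperbolic.exists_isSchottkyFamily_of_not_nearTranslate (h : IsDeltaHyperbolic X δ)
    (hq : IsQuasiLine (fun i : ℤ => (g ^ i) x) K) (hl : dist x (g x) = l) (hl₀ : 0 < l)
    (hKl : 100 * (K + δ) ≤ l) (hs : 5 * dist x (s x) ≤ 3 * l)
    (hfar : ¬ NearTranslate (fun i : ℤ => (g ^ i) x) s (2 * l)) :
    ∃ a b, (a = g ∨ a = g⁻¹) ∧ (b = g ∨ b = g⁻¹) ∧
      ∃ o, IsSchottkyFamily ![a ^ 20, s * b ^ 20 * s⁻¹] o l := by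
  simp only [NearTranslate, not_forall, not_exists, not_le] at hfar
  obtain ⟨n, hn⟩ := hfar
  obtain ⟨m, rfl | rfl⟩ := n.eq_nat_or_neg
  · obtain ⟨b, hb, hT⟩ := h.exists_isSchottkyFamily_of_lt_dist_pow hq hl hl₀ hKl hs
      (by exact_mod_cast hn)
    exact ⟨g, b, .inl rfl, hb, hT⟩
  · obtain ⟨b, hb, hT⟩ := h.exists_isSchottkyFamily_of_lt_dist_pow (g := g⁻¹) (n := m)
      (by simpa only [inv_zpow'] using hq.comp_neg) (by rwa [dist_self_inv]) hl₀ hKl hs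
      (fun j => by simpa only [inv_zpow', zpow_neg, zpow_natCast, inv_pow] using hn (-j))
    exact ⟨g⁻¹, b, .inr rfl, by rwa [inv_inv, or_comm] at hb, hT⟩

end ConjugatePowers

section Growth

variable {G : Type*} [Group G] {S : Set G}

open scoped Pointwise in
theorem wordBall_subset_pow (S : Set G) (n : ℕ) : wordBall S n ⊆ insert 1 S ^ n := by
  rintro _ ⟨L, hlen, hmem, rfl⟩
  refine Set.pow_subset_pow_right (Set.mem_insert 1 S) hlen ?_
  clear hlen
  induction L with
  | nil => simp
  | cons a L ih =>
    rw [List.prod_cons, List.length_cons, pow_succ']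
    exact Set.mul_mem_mul (Set.mem_insert_of_mem 1 (hmem a List.mem_cons_self))
      (ih fun u hu => hmem u (List.mem_cons_of_mem a hu))

open scoped Pointwise in
theorem finite_wordBall_and_ncard_le (hS : S.Finite) (n : ℕ) :
    (wordBall S n).Finite ∧ (wordBall S n).ncard ≤ (S.ncard + 1) ^ n := by
  classical
  lift S to Finset G using hS
  have hsub := wordBall_subset_pow (S : Set G) n
  rw [← Finset.coe_insert, ← Finset.coe_pow] at hsub
  refine ⟨(Finset.finite_toSet _).subset hsub, ?_⟩
  calc (wordBall (S : Set G) n).ncard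
    _ ≤ (insert 1 S ^ n).card := by
      rw [← Set.ncard_coe_finset]
      exact Set.ncard_le_ncard hsub
    _ ≤ (insert 1 S).card ^ n := Finset.card_pow_le
    _ ≤ ((S : Set G).ncard + 1) ^ n := by
      rw [Set.ncard_coe_finset]
      exact Nat.pow_le_pow_left (Finset.card_insert_le 1 S) n

/-- The exponential growth rate of the word balls of `S`, which is the entropy of the group
generated by `S` with respect to `S`. -/
noncomputable def growthRate (S : Set G) : ℝ :=
  limsup (fun n : ℕ => Real.log (wordBall S n).ncard / n) atTop

theorem isBoundedUnder_log_ncard_wordBall_div (hS : S.Finite) :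
    IsBoundedUnder (· ≤ ·) atTop fun n : ℕ => Real.log (wordBall S n).ncard / n := by
  refine isBoundedUnder_of_eventually_le (a := Real.log (S.ncard + 1)) ?_
  filter_upwards [eventually_gt_atTop 0] with n hn
  have hpos : 0 < (wordBall S n).ncard :=
    (Set.ncard_pos (finite_wordBall_and_ncard_le hS n).1).2 ⟨1, one_mem_wordBall⟩
  rw [div_le_iff₀ (by exact_mod_cast hn), mul_comm, ← Real.log_pow]
  exact Real.log_le_log (by exact_mod_cast hpos)
    (by exact_mod_cast (finite_wordBall_and_ncard_le hS n).2)

theorem log_div_le_growthRate (hS : S.Finite) {c m : ℕ} (hc : 0 < c) (hm : 0 < m)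
    (h : ∀ n, c ^ n ≤ (wordBall S (n * m)).ncard) : Real.log c / m ≤ growthRate S := by
  refine le_limsup_of_frequently_le (frequently_atTop.2 fun N => ⟨(N + 1) * m, ?_, ?_⟩)
    (isBoundedUnder_log_ncard_wordBall_div hS)
  · exact N.le_succ.trans (Nat.le_mul_of_pos_right _ hm)
  · have hlog : ((N + 1 : ℕ) : ℝ) * Real.log c ≤ Real.log (wordBall S ((N + 1) * m)).ncard := by
      rw [← Real.log_pow]
      exact Real.log_le_log (by positivity) (by exact_mod_cast h (N + 1))
    rw [Nat.cast_mul, ← mul_div_mul_left _ _ (Nat.cast_ne_zero.2 N.succ_ne_zero)]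
    gcongr

/-- The infimum of the entropies of `G` with respect to its finite symmetric generating sets. It has
the junk value `0` if `G` is not finitely generated. -/
noncomputable def algebraicEntropy (G : Type*) [Group G] : ℝ :=
  sInf {E : ℝ | ∃ S : Finset G, (∀ s ∈ S, s⁻¹ ∈ S) ∧ Subgroup.closure (S : Set G) = ⊤ ∧
    E = growthRate (S : Set G)}

theorem exists_finset_inv_mem_closure_eq_top (h : Group.FG G) :
    ∃ S : Finset G, (∀ s ∈ S, s⁻¹ ∈ S) ∧ Subgroup.closure (S : Set G) = ⊤ := by
  classical
  obtain ⟨S, hS⟩ := h.out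
  refine ⟨S ∪ S.image (·⁻¹), fun s hs => ?_, ?_⟩
  · simp only [Finset.mem_union, Finset.mem_image] at hs ⊢
    rcases hs with hs | ⟨t, ht, rfl⟩
    · exact .inr ⟨s, hs, rfl⟩
    · exact .inl (by rwa [inv_inv])
  · rw [eq_top_iff, ← hS]
    exact Subgroup.closure_mono (Finset.coe_subset.2 Finset.subset_union_left)

end Growth

section Main

variable {X : Type*} [MetricSpace X] {δ K l : ℝ} {x : X} {Γ : Subgroup (X ≃ᵢ X)}

theorem exists_almost_minimal_displacement [Nonempty X] {C : ℝ} {U : Set (X ≃ᵢ X)}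
    (hU : U.Finite) (hC : ∀ y, ∃ u ∈ U, C ≤ dist y (u y)) (hδ : 0 < δ) :
    ∃ L, C ≤ L ∧ (∀ y, ∃ u ∈ U, L ≤ dist y (u y)) ∧ ∃ y, ∀ u ∈ U, dist y (u y) < L + δ := by
  have hmax : ∀ y, ∃ u ∈ U, ∀ v ∈ U, dist y (v y) ≤ dist y (u y) := fun y =>
    Set.exists_max_image U (fun u => dist y (u y)) hU ((hC y).imp fun _ => And.left)
  choose u hu hmax using hmax
  have hbdd : BddBelow (Set.range fun y => dist y (u y y)) :=
    ⟨0, Set.forall_mem_range.2 fun _ => dist_nonneg⟩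
  refine ⟨⨅ y, dist y (u y y), le_ciInf fun y => ?_, fun y => ⟨u y, hu y, ciInf_le hbdd y⟩, ?_⟩
  · obtain ⟨v, hv, hCv⟩ := hC y
    exact hCv.trans (hmax y v hv)
  · obtain ⟨y, hy⟩ := exists_lt_of_ciInf_lt (lt_add_of_pos_right (⨅ y, dist y (u y y)) hδ)
    exact ⟨y, fun v hv => (hmax y v hv).trans_lt hy⟩

theorem nonempty_of_not_isVirtuallyNilpotent (hVN : ¬ IsVirtuallyNilpotent ↥Γ) : Nonempty X := by
  by_contra hX
  rw [not_nonempty_iff] at hX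
  have : Subsingleton (X ≃ᵢ X) := ⟨fun _ _ => IsometryEquiv.ext fun y => isEmptyElim y⟩
  exact hVN ⟨⊤, inferInstance, inferInstance⟩

theorem IsDeltaHyperbolic.exists_isQuasiLine_mul_zpow (h : IsDeltaHyperbolic X δ)
    (hX : IsGeodesicSpace X) {U : Set (X ≃ᵢ X)} (hU : ∀ u ∈ U, u⁻¹ ∈ U) {L : ℝ}
    (hL : 28 * δ < L) (hmin : ∀ y, ∃ u ∈ U, L ≤ dist y (u y))
    (hx : ∀ u ∈ U, dist x (u x) < L + δ) :
    ∃ u ∈ U, ∃ v ∈ U, IsQuasiLine (fun i : ℤ => ((u * v) ^ i) x) (10 * δ) ∧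
      2 * L - 36 * δ ≤ dist x ((u * v) x) := by
  have hδ := h.nonneg x
  obtain ⟨u, hu, v, hv, hLu, hLv, huv, hvu⟩ :=
    h.exists_almostBetween_inv_inv hX hU (by linarith) hmin hx
  have hL_le : 2 * L - 36 * δ ≤ dist x ((u * v) x) := by
    rw [IsometryEquiv.mul_apply, dist_comm, dist_apply_left, dist_comm]
    linarith [dist_self_inv u x, dist_comm x (u⁻¹ x)]
  have hmul := AlmostBetween.mul h huv hvu (by linarith) (by linarith)
  have hline := h.isQuasiLine_zpow hmul (by linarith)
  exact ⟨u, hu, v, hv, by convert hline using 1; ring, hL_le⟩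

theorem IsDeltaHyperbolic.exists_mem_not_nearTranslate (h : IsDeltaHyperbolic X δ)
    (hΓ : IsDiscreteSubgroup Γ) (hVN : ¬ IsVirtuallyNilpotent ↥Γ) {S : Set ↥Γ}
    (hS : ∀ s ∈ S, s⁻¹ ∈ S) (hcl : Subgroup.closure S = ⊤) {g : ↥Γ}
    (hq : IsQuasiLine (fun i : ℤ => (g.1 ^ i) x) K) (hl : dist x (g.1 x) = l) (hl₀ : 0 < l)
    (hKl : 100 * (K + δ) ≤ l) :
    ∃ s ∈ S, ¬ NearTranslate (fun i : ℤ => (g.1 ^ i) x) s.1 (2 * l) := by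
  by_contra! hnear
  refine hVN (hΓ.isVirtuallyNilpotent_of_forall_exists_zpow g (x := x) (R := 2 * l) fun γ => ?_)
  suffices hγ : NearTranslate (fun i : ℤ => (g.1 ^ i) x) γ.1 (2 * l) from hγ 0
  refine forall_of_one_of_mul_left
    (p := fun γ : ↥Γ => NearTranslate (fun i : ℤ => (g.1 ^ i) x) γ.1 (2 * l)) hS hcl ?_ ?_ γ
  · exact fun k => ⟨k, (dist_self _).trans_le (by positivity)⟩
  · exact fun s hs t ht => (hnear s hs).mul ht h hq (fun i => by
      rw [zpow_add_one, IsometryEquiv.mul_apply, IsometryEquiv.dist_eq, hl]) hl₀ hKl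

theorem IsDeltaHyperbolic.two_pow_le_ncard_wordBall (h : IsDeltaHyperbolic X δ)
    (hΓ : IsDiscreteSubgroup Γ) (hVN : ¬ IsVirtuallyNilpotent ↥Γ) {S : Set ↥Γ} (hSfin : S.Finite)
    (hS : ∀ s ∈ S, s⁻¹ ∈ S) (hcl : Subgroup.closure S = ⊤) {g : ↥Γ} {m : ℕ}
    (hg : g ∈ wordBall S m) (hq : IsQuasiLine (fun i : ℤ => (g.1 ^ i) x) K)
    (hl : dist x (g.1 x) = l) (hl₀ : 0 < l) (hKl : 100 * (K + δ) ≤ l)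
    (hSl : ∀ s ∈ S, 5 * dist x (s.1 x) ≤ 3 * l) (n : ℕ) :
    2 ^ n ≤ (wordBall S (n * (20 * m + 2))).ncard := by
  have hK := hq.nonneg
  obtain ⟨s, hs, hfar⟩ := h.exists_mem_not_nearTranslate hΓ hVN hS hcl hq hl hl₀ hKl
  obtain ⟨a, b, ha, hb, o, hT⟩ :=
    h.exists_isSchottkyFamily_of_not_nearTranslate hq hl hl₀ hKl (hSl s hs) hfar
  have hpow : ∀ c : X ≃ᵢ X, c = g.1 ∨ c = g.1⁻¹ →
      ∃ c' : ↥Γ, c'.1 = c ∧ c' ^ 20 ∈ wordBall S (20 * m) := by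
    rintro c (rfl | rfl)
    · exact ⟨g, rfl, pow_mem_wordBall hg 20⟩
    · exact ⟨g⁻¹, rfl, pow_mem_wordBall (inv_mem_wordBall hS hg) 20⟩
  obtain ⟨a, rfl, ha'⟩ := hpow a ha
  obtain ⟨b, rfl, hb'⟩ := hpow b hb
  have hs₁ := mem_wordBall_one hs
  have hconj : s * b ^ 20 * s⁻¹ ∈ wordBall S (20 * m + 2) := by
    rw [show 20 * m + 2 = 1 + 20 * m + 1 by ring]
    exact mul_mem_wordBall (mul_mem_wordBall hs₁ hb') (inv_mem_wordBall hS hs₁)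
  have hmem : ∀ i, ![a.1 ^ 20, s.1 * b.1 ^ 20 * s.1⁻¹] i ∈
      Subtype.val '' wordBall S (20 * m + 2) :=
    Fin.forall_fin_two.2 ⟨⟨_, wordBall_mono S (Nat.le_add_right _ 2) ha', rfl⟩, _, hconj, rfl⟩
  simpa using
    hT.card_pow_le_ncard_wordBall h (by linarith) hmem (finite_wordBall_and_ncard_le hSfin _).1

theorem exists_two_pow_le_ncard_wordBall (P : ℝ) {r δ : ℝ} (hr : 0 < r) (hδ : 0 < δ) :
    ∃ m : ℕ, 0 < m ∧ ∀ (X : Type*) [MetricSpace X] (σ : X → X → ℝ → X), IsGCB σ →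
      IsDeltaHyperbolic X δ → IsPacked X P r → ∀ Γ : Subgroup (X ≃ᵢ X),
      (∀ g ∈ Γ, IsSigmaIsometry σ g) → IsDiscreteSubgroup Γ → ¬ IsVirtuallyNilpotent ↥Γ →
      ∀ S : Set ↥Γ, S.Finite → (∀ s ∈ S, s⁻¹ ∈ S) → Subgroup.closure S = ⊤ →
      ∀ n, 2 ^ n ≤ (wordBall S (n * m)).ncard := by
  obtain ⟨M, hM⟩ := exists_wordBall_radius_isVirtuallyNilpotent P hr (1000 * δ)
  refine ⟨20 * (M + 1 + (M + 1)) + 2, by positivity, ?_⟩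
  intro X _ σ hσ hX hP Γ hΓσ hΓ hVN S hSfin hS hcl
  have := nonempty_of_not_isVirtuallyNilpotent hVN
  let U : Set (X ≃ᵢ X) := Subtype.val '' wordBall S (M + 1)
  have hUfin : U.Finite := (finite_wordBall_and_ncard_le hSfin _).1.image _
  have hUinv : ∀ u ∈ U, u⁻¹ ∈ U := by
    rintro _ ⟨w, hw, rfl⟩
    exact ⟨w⁻¹, inv_mem_wordBall hS hw, rfl⟩
  have hUfar : ∀ y, ∃ u ∈ U, 1000 * δ ≤ dist y (u y) := fun y => by
    by_contra! hclose
    exact hVN (hM X σ hσ hP Γ hΓσ hΓ S hS hcl y fun w hw =>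
      (hclose w.1 ⟨w, wordBall_mono S M.le_succ hw, rfl⟩).le)
  obtain ⟨L, hL, hmin, x, hx⟩ := exists_almost_minimal_displacement hUfin hUfar hδ
  obtain ⟨_, ⟨u, hu, rfl⟩, _, ⟨v, hv, rfl⟩, hline, hlong⟩ :=
    hX.exists_isQuasiLine_mul_zpow hσ.isGeodesicSpace hUinv (by linarith) hmin hx
  refine hX.two_pow_le_ncard_wordBall hΓ hVN hSfin hS hcl (mul_mem_wordBall hu hv) hline rfl
    (by rw [Subgroup.coe_mul]; linarith) (by rw [Subgroup.coe_mul]; linarith) fun s hs => ?_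
  have := hx s.1 ⟨s, wordBall_mono S (Nat.le_add_left 1 M) (mem_wordBall_one hs), rfl⟩
  rw [Subgroup.coe_mul]
  linarith

theorem algebraic_entropy_lower_bound_general (P₀ r₀ δ : ℝ) (hr₀ : 0 < r₀) (hδ : 0 < δ) :
    ∃ C₀ : ℝ, 0 < C₀ ∧ ∀ (X : Type*) [MetricSpace X] (σ : X → X → ℝ → X),
      IsGCB σ → IsDeltaHyperbolic X δ → IsPacked X P₀ r₀ →
      ∀ Γ : Subgroup (X ≃ᵢ X), (∀ g ∈ Γ, IsSigmaIsometry σ g) → IsDiscreteSubgroup Γ →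
        ¬ IsVirtuallyNilpotent ↥Γ → Group.FG ↥Γ → C₀ ≤ algebraicEntropy ↥Γ := by
  obtain ⟨m, hm, hgrowth⟩ := exists_two_pow_le_ncard_wordBall P₀ hr₀ hδ
  refine ⟨Real.log 2 / m, div_pos (Real.log_pos one_lt_two) (by exact_mod_cast hm), ?_⟩
  intro X _ σ hσ hX hP Γ hΓσ hΓ hVN hFG
  obtain ⟨S₀, hS₀, hcl₀⟩ := exists_finset_inv_mem_closure_eq_top hFG
  refine le_csInf ⟨_, S₀, hS₀, hcl₀, rfl⟩ ?_
  rintro _ ⟨S, hS, hcl, rfl⟩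
  exact log_div_le_growthRate S.finite_toSet two_pos hm
    (hgrowth X σ hσ hX hP Γ hΓσ hΓ hVN S S.finite_toSet hS hcl)

end Main

/-- **Corollary 1.2(i)**: uniform lower bound for the algebraic entropy. -/
theorem algebraic_entropy_lower_bound
    (P₀ r₀ δ : ℝ) (hP₀ : 0 < P₀) (hr₀ : 0 < r₀) (hδ : 0 < δ) :
    ∃ C₀ : ℝ, 0 < C₀ ∧
      ∀ (X : Type*) [MetricSpace X] [CompleteSpace X] (σ : X → X → ℝ → X),
        IsGCB σ → IsDeltaHyperbolic X δ → IsPacked X P₀ r₀ →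
        ∀ Γ : Subgroup (X ≃ᵢ X), (∀ g ∈ Γ, IsSigmaIsometry σ g) →
          IsDiscreteSubgroup Γ → IsNonElementary Γ → Group.FG ↥Γ →
          C₀ ≤ sInf {E : ℝ | ∃ S : Finset ↥Γ,
            (∀ s ∈ S, s⁻¹ ∈ S) ∧ Subgroup.closure (S : Set ↥Γ) = ⊤ ∧
            E = Filter.limsup (fun n : ℕ =>
              Real.log ((Set.ncard {g : ↥Γ | ∃ L : List ↥Γ, L.length ≤ n ∧
                (∀ u ∈ L, u ∈ S) ∧ g = L.prod} : ℕ) : ℝ) / (n : ℝ)) Filter.atTop} := by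
  obtain ⟨C₀, hC₀, h⟩ := algebraic_entropy_lower_bound_general P₀ r₀ δ hr₀ hδ
  exact ⟨C₀, hC₀, fun X _ _ σ hσ hX hP Γ hΓσ hΓ hne =>
    h X σ hσ hX hP Γ hΓσ hΓ hne.not_isVirtuallyNilpotent⟩
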